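/- Let 𝒜 : ℝ^{n₁×n₂} → ℝ^m be a random linear operator represented by matrices A₁,…,A_m whose entries are i.i.d. standard Gaussian N(0,1) random variables, and let τ ∈ [1, n₁]. Then for every t > 0, Pr[ρ_τ^max(𝒜/√m) > 1 + 3√(τ n₂/m) + t] ≤ exp(−m t²/2) and Pr[ρ_τ^min(𝒜/√m) < 1 − 3√(τ n₂/m) − t] ≤ exp(−m t²/2). -/

import Mathlib

open scoped BigOperators

noncomputable section

/-- Frobenius norm of a real matrix. -/
def frobNorm {n₁ n₂ : ℕ} (X : Matrix (Fin n₁) (Fin n₂) ℝ) : ℝ :=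
  Real.sqrt (∑ i, ∑ j, (X i j) ^ 2)

/-- Singular values of a real matrix: square roots of eigenvalues of `X * Xᴴ`. -/
def singVals {n₁ n₂ : ℕ} (X : Matrix (Fin n₁) (Fin n₂) ℝ) : Fin n₁ → ℝ :=
  fun i => Real.sqrt ((Matrix.isHermitian_mul_conjTranspose_self X).eigenvalues i)

/-- Nuclear norm: sum of singular values. -/
def nuclearNorm {n₁ n₂ : ℕ} (X : Matrix (Fin n₁) (Fin n₂) ℝ) : ℝ :=
  ∑ i, singVals X i

/-- Operator norm: largest singular value. -/
def matOpNorm {n₁ n₂ : ℕ} (X : Matrix (Fin n₁) (Fin n₂) ℝ) : ℝ :=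
  ⨆ i, singVals X i

/-- ℓ*-rank. -/
def lstarRank {n₁ n₂ : ℕ} (X : Matrix (Fin n₁) (Fin n₂) ℝ) : ℝ :=
  nuclearNorm X ^ 2 / frobNorm X ^ 2

/-- Euclidean norm of a vector. -/
def vnorm {m : ℕ} (v : Fin m → ℝ) : ℝ :=
  Real.sqrt (∑ k, (v k) ^ 2)

/-- Matrix inner product. -/
def matInner {n₁ n₂ : ℕ} (X Y : Matrix (Fin n₁) (Fin n₂) ℝ) : ℝ :=
  (X.transpose * Y).trace

def cmsvMin {n₁ n₂ m : ℕ} (A : Matrix (Fin n₁) (Fin n₂) ℝ → (Fin m → ℝ)) (τ : ℝ) : ℝ :=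
  sInf {c | ∃ X : Matrix (Fin n₁) (Fin n₂) ℝ, X ≠ 0 ∧ lstarRank X ≤ τ ∧ c = vnorm (A X) / frobNorm X}

def cmsvMax {n₁ n₂ m : ℕ} (A : Matrix (Fin n₁) (Fin n₂) ℝ → (Fin m → ℝ)) (τ : ℝ) : ℝ :=
  sSup {c | ∃ X : Matrix (Fin n₁) (Fin n₂) ℝ, X ≠ 0 ∧ lstarRank X ≤ τ ∧ c = vnorm (A X) / frobNorm X}

def rcsvMin {n₁ n₂ m : ℕ} (A : Matrix (Fin n₁) (Fin n₂) ℝ → (Fin m → ℝ)) (r : ℕ) : ℝ :=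
  sInf {c | ∃ X : Matrix (Fin n₁) (Fin n₂) ℝ, X ≠ 0 ∧ X.rank ≤ r ∧ c = vnorm (A X) / frobNorm X}

def rcsvMax {n₁ n₂ m : ℕ} (A : Matrix (Fin n₁) (Fin n₂) ℝ → (Fin m → ℝ)) (r : ℕ) : ℝ :=
  sSup {c | ∃ X : Matrix (Fin n₁) (Fin n₂) ℝ, X ≠ 0 ∧ X.rank ≤ r ∧ c = vnorm (A X) / frobNorm X}

def mRIC {n₁ n₂ m : ℕ} (A : Matrix (Fin n₁) (Fin n₂) ℝ → (Fin m → ℝ)) (r : ℕ) : ℝ :=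
  sInf {δ : ℝ | 0 < δ ∧ ∀ X : Matrix (Fin n₁) (Fin n₂) ℝ, X ≠ 0 → X.rank ≤ r →
    1 - δ ≤ (vnorm (A X)) ^ 2 / (frobNorm X) ^ 2 ∧ (vnorm (A X)) ^ 2 / (frobNorm X) ^ 2 ≤ 1 + δ}

def opOf {n₁ n₂ m : ℕ} (A : Fin m → Matrix (Fin n₁) (Fin n₂) ℝ) :
    Matrix (Fin n₁) (Fin n₂) ℝ → (Fin m → ℝ) :=
  fun X k => matInner (A k) X


open MeasureTheory ProbabilityTheory

/-- The Gaussian ensemble: all entries of the `m` representing matrices are i.i.d. `N(0,1)`. -/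
def gaussianEnsemble (m n₁ n₂ : ℕ) : Measure ((Fin m × Fin n₁ × Fin n₂) → ℝ) :=
  Measure.pi fun _ => gaussianReal 0 1

/-- The collection of representing matrices determined by a sample `ω`. -/
def ensembleMatrices {m n₁ n₂ : ℕ} (ω : (Fin m × Fin n₁ × Fin n₂) → ℝ) :
    Fin m → Matrix (Fin n₁) (Fin n₂) ℝ :=
  fun k => Matrix.of fun i j => ω (k, i, j)

/-- The scaled operator `𝒜/√m` determined by a sample `ω`. -/
def scaledOp {m n₁ n₂ : ℕ} (ω : (Fin m × Fin n₁ × Fin n₂) → ℝ) :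
    Matrix (Fin n₁) (Fin n₂) ℝ → (Fin m → ℝ) :=
  fun X k => opOf (ensembleMatrices ω) X k / Real.sqrt m

/- The representing matrices of the ensemble form an `m × n₁n₂` Gaussian matrix, and the constrained
singular values of `𝒜` are the extrema of `‖𝒜 X‖ = max_u ⟪u, 𝒜 X⟫` over `‖X‖_F = 1`, `τ(X) ≤ τ`.
Gordon's comparison, obtained by differentiating a smoothed min-max along a Gaussian rotation, shows
that in expectation these extrema lie within `E sup ⟪X, H⟫` of `E ‖g‖`, for `g` and `H` standard
Gaussian in dimensions `m` and `n₁ × n₂`, and Gaussian concentration of Lipschitz functions turns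
this into tail bounds. Trace duality gives `⟪X, H⟫ ≤ ‖X‖_* ‖H‖ ≤ √τ ‖H‖` on the constraint set, and
the same comparison applied to `max_{u, v} ⟪u, H v⟫` gives Chevet's bound `E ‖H‖ ≤ √n₁ + √n₂`.
Finally `√(m - 1) ≤ E ‖g‖ ≤ √m`, and the loss `√m - √(m - 1)` is absorbed in the constant `3`. -/

open scoped RealInnerProductSpace

section Integrability

variable {E F : Type*} [NormedAddCommGroup E] [NormedSpace ℝ E] [CompleteSpace E]
  [SecondCountableTopology E] [MeasurableSpace E] [BorelSpace E] [NormedAddCommGroup F]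
  {μ : Measure E} [IsGaussian μ]

lemma integrable_exp_mul_norm (μ : Measure E) [IsGaussian μ] (a : ℝ) :
    Integrable (fun x ↦ Real.exp (a * ‖x‖)) μ := by
  obtain ⟨c, hc, hint⟩ := IsGaussian.exists_integrable_exp_sq μ
  refine (hint.const_mul (Real.exp (a ^ 2 / (4 * c)))).mono' (by fun_prop) (ae_of_all _ fun x ↦ ?_)
  have complete_square : a ^ 2 / (4 * c) + c * ‖x‖ ^ 2 - a * ‖x‖ = c * (‖x‖ - a / (2 * c)) ^ 2 := by
    field_simp; ring
  rw [Real.norm_eq_abs, Real.abs_exp, ← Real.exp_add, Real.exp_le_exp]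
  have := mul_nonneg hc.le (sq_nonneg (‖x‖ - a / (2 * c)))
  linarith

lemma integrable_of_norm_le_exp_mul_norm {f : E → F} {C a : ℝ}
    (hf : AEStronglyMeasurable f μ) (hle : ∀ x, ‖f x‖ ≤ C * Real.exp (a * ‖x‖)) :
    Integrable f μ :=
  ((integrable_exp_mul_norm μ a).const_mul C).mono' hf (ae_of_all _ hle)

lemma hasDerivAt_integral_of_norm_le_exp_mul_norm {f f' : ℝ → E → ℝ} {C a : ℝ}
    (hf : ∀ θ, Integrable (f θ) μ) (hf' : ∀ θ, Continuous (f' θ))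
    (hderiv : ∀ θ x, HasDerivAt (f · x) (f' θ x) θ)
    (hle : ∀ θ x, |f' θ x| ≤ C * Real.exp (a * ‖x‖)) (θ : ℝ) :
    HasDerivAt (fun θ ↦ ∫ x, f θ x ∂μ) (∫ x, f' θ x ∂μ) θ :=
  (hasDerivAt_integral_of_dominated_loc_of_deriv_le Filter.univ_mem
    (.of_forall fun θ ↦ (hf θ).aestronglyMeasurable) (hf θ) (hf' θ).aestronglyMeasurable
    (ae_of_all _ fun x θ _ ↦ hle θ x) ((integrable_exp_mul_norm μ a).const_mul C)
    (ae_of_all _ fun x θ _ ↦ hderiv θ x)).2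

end Integrability

section Lipschitz

variable {E : Type*} [NormedAddCommGroup E] {f : E → ℝ} {K : NNReal}

lemma abs_le_add_mul_norm_of_lipschitzWith (hf : LipschitzWith K f) (x : E) :
    |f x| ≤ |f 0| + K * ‖x‖ := by
  have := hf.norm_sub_le x 0
  rw [sub_zero, Real.norm_eq_abs] at this
  linarith [abs_sub_abs_le_abs_sub (f x) (f 0)]

lemma abs_le_mul_exp_norm_of_lipschitzWith (hf : LipschitzWith K f) (x : E) :
    |f x| ≤ (|f 0| + K) * Real.exp ‖x‖ := by
  calc |f x| ≤ |f 0| * 1 + K * ‖x‖ := by simpa using abs_le_add_mul_norm_of_lipschitzWith hf x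
    _ ≤ |f 0| * Real.exp ‖x‖ + K * Real.exp ‖x‖ := by
      gcongr
      · exact Real.one_le_exp (norm_nonneg x)
      · linarith [Real.add_one_le_exp ‖x‖]
    _ = (|f 0| + K) * Real.exp ‖x‖ := by ring

lemma integrable_of_lipschitzWith [NormedSpace ℝ E] [CompleteSpace E] [SecondCountableTopology E]
    [MeasurableSpace E] [BorelSpace E] {μ : Measure E} [IsGaussian μ] (hf : LipschitzWith K f) :
    Integrable f μ :=
  ((integrable_const |f 0|).add (IsGaussian.integrable_fun_id.norm.const_mul (K : ℝ))).mono'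
    hf.continuous.aestronglyMeasurable (ae_of_all _ (abs_le_add_mul_norm_of_lipschitzWith hf))

lemma integrable_mul_of_lipschitzWith [NormedSpace ℝ E] [CompleteSpace E]
    [SecondCountableTopology E] [MeasurableSpace E] [BorelSpace E] {μ : Measure E} [IsGaussian μ]
    {k : E → ℝ} {C a : ℝ} (hf : LipschitzWith K f) (hk : Continuous k)
    (hk_le : ∀ x, |k x| ≤ C * Real.exp (a * ‖x‖)) : Integrable (fun x ↦ f x * k x) μ := by
  refine integrable_of_norm_le_exp_mul_norm (a := 1 + a) (C := (|f 0| + K) * C)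
    (hf.continuous.mul hk).aestronglyMeasurable fun x ↦ ?_
  calc |f x * k x| ≤ ((|f 0| + K) * Real.exp ‖x‖) * (C * Real.exp (a * ‖x‖)) := by
        rw [abs_mul]
        exact mul_le_mul (abs_le_mul_exp_norm_of_lipschitzWith hf x) (hk_le x) (abs_nonneg _)
          (by positivity)
    _ = (|f 0| + K) * C * Real.exp ((1 + a) * ‖x‖) := by rw [one_add_mul, Real.exp_add]; ring

end Lipschitz

section GrowthBounds

variable {E : Type*} [NormedAddCommGroup E] [InnerProductSpace ℝ E]

lemma abs_dual_mul_inner_le (L : E →L[ℝ] ℝ) (v x : E) :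
    |L x * ⟪v, x⟫| ≤ ‖L‖ * ‖v‖ * Real.exp (2 * ‖x‖) := by
  calc |L x * ⟪v, x⟫|
    _ ≤ (‖L‖ * ‖x‖) * (‖v‖ * ‖x‖) := by
      rw [abs_mul]
      exact mul_le_mul (L.le_opNorm x) (abs_real_inner_le_norm v x) (abs_nonneg _) (by positivity)
    _ ≤ (‖L‖ * Real.exp ‖x‖) * (‖v‖ * Real.exp ‖x‖) := by
      gcongr <;> linarith [Real.add_one_le_exp ‖x‖]
    _ = ‖L‖ * ‖v‖ * Real.exp (2 * ‖x‖) := by rw [two_mul, Real.exp_add]; ring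

lemma abs_mul_inner_le_of_lipschitzWith {f : E → ℝ} {K : NNReal} (hK : LipschitzWith K f)
    (v x : E) : |f x * ⟪v, x⟫| ≤ (|f 0| + K) * ‖v‖ * Real.exp (2 * ‖x‖) := by
  calc |f x * ⟪v, x⟫|
    _ ≤ ((|f 0| + K) * Real.exp ‖x‖) * (‖v‖ * ‖x‖) := by
      rw [abs_mul]
      gcongr
      · exact abs_le_mul_exp_norm_of_lipschitzWith hK x
      · exact abs_real_inner_le_norm v x
    _ ≤ ((|f 0| + K) * Real.exp ‖x‖) * (‖v‖ * Real.exp ‖x‖) := by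
      gcongr
      linarith [Real.add_one_le_exp ‖x‖]
    _ = (|f 0| + K) * ‖v‖ * Real.exp (2 * ‖x‖) := by rw [two_mul, Real.exp_add]; ring

end GrowthBounds

section Rotation

variable {E : Type*} [NormedAddCommGroup E] [NormedSpace ℝ E]

lemma hasDerivAt_rotation (θ : ℝ) (z : E × E) :
    HasDerivAt (fun θ ↦ ContinuousLinearMap.rotation θ z)
      ((ContinuousLinearMap.rotation θ z).2, -(ContinuousLinearMap.rotation θ z).1) θ := by
  simp only [ContinuousLinearMap.rotation_apply, neg_add, ← neg_smul]
  exact (((Real.hasDerivAt_cos θ).smul_const _).add ((Real.hasDerivAt_sin θ).smul_const _)).prodMk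
    (((Real.hasDerivAt_sin θ).neg.smul_const _).add ((Real.hasDerivAt_cos θ).smul_const _))

lemma norm_rotation_le (θ : ℝ) (z : E × E) :
    ‖ContinuousLinearMap.rotation θ z‖ ≤ 2 * ‖z‖ := by
  have bound {a b : ℝ} (ha : |a| ≤ 1) (hb : |b| ≤ 1) : ‖a • z.1 + b • z.2‖ ≤ 2 * ‖z‖ := by
    calc ‖a • z.1 + b • z.2‖ ≤ |a| * ‖z.1‖ + |b| * ‖z.2‖ := by
          simpa only [norm_smul, Real.norm_eq_abs] using norm_add_le (a • z.1) (b • z.2)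
      _ ≤ 1 * ‖z‖ + 1 * ‖z‖ := by gcongr <;> [exact norm_fst_le z; exact norm_snd_le z]
      _ = 2 * ‖z‖ := by ring
  exact max_le (bound (Real.abs_cos_le_one θ) (Real.abs_sin_le_one θ))
    (bound (by simpa using Real.abs_sin_le_one θ) (Real.abs_cos_le_one θ))

end Rotation

section IntegrationByParts

variable {E : Type*} [NormedAddCommGroup E] [InnerProductSpace ℝ E] [FiniteDimensional ℝ E]
  [MeasurableSpace E] [BorelSpace E]

lemma integral_inner_mul_inner_stdGaussian (u v : E) :
    ∫ x, ⟪u, x⟫ * ⟪v, x⟫ ∂stdGaussian E = ⟪u, v⟫ := by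
  have := covarianceBilin_apply (μ := stdGaussian E) IsGaussian.memLp_two_id u v
  rw [covarianceBilin_stdGaussian, innerSL_apply_apply] at this
  simpa using this.symm

lemma integral_dual_mul_inner_stdGaussian (L : E →L[ℝ] ℝ) (v : E) :
    ∫ x, L x * ⟪v, x⟫ ∂stdGaussian E = L v := by
  simpa using integral_inner_mul_inner_stdGaussian ((InnerProductSpace.toDual ℝ E).symm L) v

lemma integral_norm_sq_stdGaussian :
    ∫ x, ‖x‖ ^ 2 ∂stdGaussian E = Module.finrank ℝ E := by
  have hint (i) : Integrable (fun x ↦ ⟪stdOrthonormalBasis ℝ E i, x⟫ ^ 2) (stdGaussian E) :=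
    (IsGaussian.memLp_dual _ (innerSL ℝ (stdOrthonormalBasis ℝ E i)) 2 (by simp)).integrable_sq
  simp_rw [← (stdOrthonormalBasis ℝ E).sum_sq_inner_right]
  rw [integral_finsetSum _ fun i _ ↦ hint i]
  simp_rw [pow_two, integral_inner_mul_inner_stdGaussian]
  simp

lemma integral_comp_rotation {f : E × E → ℝ} (hf : Continuous f) (θ : ℝ) :
    ∫ z, f (ContinuousLinearMap.rotation θ z) ∂(stdGaussian E).prod (stdGaussian E) =
      ∫ z, f z ∂(stdGaussian E).prod (stdGaussian E) := by
  rw [← integral_map (by fun_prop) hf.aestronglyMeasurable,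
    IsGaussian.map_rotation_eq_self (by simp)]

lemma integrable_comp_rotation {f : E × E → ℝ} (hf : Continuous f)
    (hint : Integrable f ((stdGaussian E).prod (stdGaussian E))) (θ : ℝ) :
    Integrable (fun z ↦ f (ContinuousLinearMap.rotation θ z))
      ((stdGaussian E).prod (stdGaussian E)) := by
  rw [← IsGaussian.map_rotation_eq_self (μ := stdGaussian E) (by simp) θ] at hint
  exact (integrable_map_measure hf.aestronglyMeasurable (by fun_prop)).1 hint

lemma integral_eq_zero_of_hasDerivAt_comp_rotation {f f' : E × E → ℝ} {C a : ℝ}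
    (hf : Continuous f) (hint : Integrable f ((stdGaussian E).prod (stdGaussian E)))
    (hf' : Continuous f') (hle : ∀ z, |f' z| ≤ C * Real.exp (a * ‖z‖))
    (hderiv : ∀ θ z, HasDerivAt (fun θ ↦ f (ContinuousLinearMap.rotation θ z))
      (f' (ContinuousLinearMap.rotation θ z)) θ) :
    ∫ z, f' z ∂(stdGaussian E).prod (stdGaussian E) = 0 := by
  have hle' (θ : ℝ) (z : E × E) : |f' (ContinuousLinearMap.rotation θ z)| ≤
      |C| * Real.exp (|a| * 2 * ‖z‖) := by
    calc |f' (ContinuousLinearMap.rotation θ z)|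
      _ ≤ C * Real.exp (a * ‖ContinuousLinearMap.rotation θ z‖) := hle _
      _ ≤ |C| * Real.exp (|a| * (2 * ‖z‖)) := by
        gcongr
        · exact le_abs_self C
        · exact le_abs_self a
        · exact norm_rotation_le θ z
      _ = |C| * Real.exp (|a| * 2 * ‖z‖) := by ring_nf
  have := hasDerivAt_integral_of_norm_le_exp_mul_norm (integrable_comp_rotation hf hint)
    (fun θ ↦ by fun_prop) hderiv hle' 0
  simp only [integral_comp_rotation hf, integral_comp_rotation hf'] at this
  exact this.unique (hasDerivAt_const 0 _)

/- Differentiating the rotation-invariant quantity `∫∫ f x * ⟪v, y⟫` along rotations of `(x, y)`. -/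
lemma integral_mul_inner_stdGaussian {f : E → ℝ} {K : NNReal} (hf : ContDiff ℝ 1 f)
    (hK : LipschitzWith K f) (v : E) :
    ∫ x, f x * ⟪v, x⟫ ∂stdGaussian E = ∫ x, fderiv ℝ f x v ∂stdGaussian E := by
  have hf0 := hf.continuous
  have hf1 := hf.continuous_fderiv_apply one_ne_zero
  have bound_fderiv (z : E × E) : |fderiv ℝ f z.1 z.2 * ⟪v, z.2⟫| ≤
      K * ‖v‖ * Real.exp (2 * ‖z‖) := by
    refine (abs_dual_mul_inner_le _ v z.2).trans ?_
    gcongr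
    exacts [norm_fderiv_le_of_lipschitz ℝ hK, norm_snd_le z]
  have bound_mul (z : E × E) : |f z.1 * ⟪v, z.1⟫| ≤
      (|f 0| + K) * ‖v‖ * Real.exp (2 * ‖z‖) := by
    refine (abs_mul_inner_le_of_lipschitzWith hK v z.1).trans ?_
    gcongr
    exact norm_fst_le z
  have hint_fderiv : Integrable (fun z : E × E ↦ fderiv ℝ f z.1 z.2 * ⟪v, z.2⟫)
      ((stdGaussian E).prod (stdGaussian E)) :=
    integrable_of_norm_le_exp_mul_norm (by fun_prop) bound_fderiv
  have hint_mul : Integrable (fun z : E × E ↦ f z.1 * ⟪v, z.1⟫)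
      ((stdGaussian E).prod (stdGaussian E)) :=
    integrable_of_norm_le_exp_mul_norm (by fun_prop) bound_mul
  have generator : ∫ z, (fderiv ℝ f z.1 z.2 * ⟪v, z.2⟫ - f z.1 * ⟪v, z.1⟫)
      ∂(stdGaussian E).prod (stdGaussian E) = 0 := by
    refine integral_eq_zero_of_hasDerivAt_comp_rotation (f := fun z ↦ f z.1 * ⟪v, z.2⟫)
      (by fun_prop) ((integrable_of_lipschitzWith hK).mul_prod
        (IsGaussian.integrable_dual _ (innerSL ℝ v))) (by fun_prop)
      (C := K * ‖v‖ + (|f 0| + K) * ‖v‖) (a := 2) (fun z ↦ ?_) (fun θ z ↦ ?_)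
    · rw [add_mul]
      exact (abs_sub _ _).trans (add_le_add (bound_fderiv z) (bound_mul z))
    · have hrot := hasDerivAt_rotation θ z
      have := ((hf.differentiable one_ne_zero _).hasFDerivAt.comp_hasDerivAt θ hrot.fst).mul
        ((innerSL ℝ v).hasFDerivAt.comp_hasDerivAt θ hrot.snd)
      rw [map_neg, mul_neg, ← sub_eq_add_neg] at this
      exact this
  rw [integral_sub hint_fderiv hint_mul, sub_eq_zero, integral_prod _ hint_fderiv,
    integral_fun_fst (f := fun x ↦ f x * ⟪v, x⟫)] at generator
  simpa [integral_dual_mul_inner_stdGaussian] using generator.symm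

end IntegrationByParts

section RotationGrowth

variable {E : Type*} [NormedAddCommGroup E] [NormedSpace ℝ E] {f g : E → ℝ} {K : NNReal} {C a : ℝ}

lemma abs_mul_comp_rotation_le (hf : LipschitzWith K f) (ha : 0 ≤ a) {k : E × E → ℝ}
    (hk : ∀ w, |k w| ≤ C * Real.exp (a * ‖w‖)) (θ : ℝ) (z : E × E) :
    |f z.1 * k (ContinuousLinearMap.rotation θ z)| ≤
      (|f 0| + K) * C * Real.exp ((1 + 2 * a) * ‖z‖) := by
  have hC : 0 ≤ C := by simpa using (abs_nonneg _).trans (hk 0)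
  calc |f z.1 * k (ContinuousLinearMap.rotation θ z)|
    _ ≤ ((|f 0| + K) * Real.exp ‖z.1‖) *
        (C * Real.exp (a * ‖ContinuousLinearMap.rotation θ z‖)) := by
      rw [abs_mul]
      gcongr
      exacts [abs_le_mul_exp_norm_of_lipschitzWith hf z.1, hk _]
    _ ≤ ((|f 0| + K) * Real.exp ‖z‖) * (C * Real.exp (a * (2 * ‖z‖))) := by
      gcongr
      exacts [norm_fst_le z, norm_rotation_le θ z]
    _ = (|f 0| + K) * C * Real.exp ((1 + 2 * a) * ‖z‖) := by
      rw [show (1 + 2 * a) * ‖z‖ = ‖z‖ + a * (2 * ‖z‖) by ring, Real.exp_add]; ring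

lemma abs_fderiv_apply_le (ha : 0 ≤ a) (hg'_le : ∀ x, ‖fderiv ℝ g x‖ ≤ C * Real.exp (a * ‖x‖))
    (w : E × E) : |fderiv ℝ g w.1 w.2| ≤ C * Real.exp ((a + 1) * ‖w‖) := by
  have hC : 0 ≤ C := by simpa using (norm_nonneg _).trans (hg'_le 0)
  calc |fderiv ℝ g w.1 w.2| ≤ (C * Real.exp (a * ‖w.1‖)) * ‖w.2‖ :=
        ContinuousLinearMap.le_of_opNorm_le _ (hg'_le w.1) _
    _ ≤ (C * Real.exp (a * ‖w‖)) * Real.exp ‖w‖ := by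
      gcongr
      exacts [norm_fst_le w, (norm_snd_le w).trans (by linarith [Real.add_one_le_exp ‖w‖])]
    _ = C * Real.exp ((a + 1) * ‖w‖) := by rw [add_one_mul, Real.exp_add]; ring

lemma rotation_neg_rotation_fst (θ : ℝ) (z : E × E) :
    (ContinuousLinearMap.rotation (-θ) (ContinuousLinearMap.rotation θ z)).1 = z.1 := by
  calc (ContinuousLinearMap.rotation (-θ) (ContinuousLinearMap.rotation θ z)).1
    _ = (Real.cos θ ^ 2 + Real.sin θ ^ 2) • z.1 := by
      simp only [ContinuousLinearMap.rotation_apply, Real.cos_neg, Real.sin_neg]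
      module
    _ = z.1 := by rw [Real.cos_sq_add_sin_sq, one_smul]

end RotationGrowth

section Covariance

variable {E : Type*} [NormedAddCommGroup E] [InnerProductSpace ℝ E] [FiniteDimensional ℝ E]
  [MeasurableSpace E] [BorelSpace E] {f g : E → ℝ} {K : NNReal} {C a : ℝ}

lemma abs_integral_mul_dual_le (hf : ContDiff ℝ 1 f) (hK : LipschitzWith K f) (L : E →L[ℝ] ℝ) :
    |∫ x, f x * L x ∂stdGaussian E| ≤ K * ‖L‖ := by
  obtain ⟨v, rfl⟩ := (InnerProductSpace.toDual ℝ E).surjective L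
  simp_rw [InnerProductSpace.toDual_apply_apply, LinearIsometryEquiv.norm_map]
  rw [integral_mul_inner_stdGaussian hf hK]
  have hle (x : E) : ‖fderiv ℝ f x v‖ ≤ K * ‖v‖ :=
    ContinuousLinearMap.le_of_opNorm_le _ (norm_fderiv_le_of_lipschitz ℝ hK) v
  simpa using norm_integral_le_of_norm_le_const (μ := stdGaussian E) (ae_of_all _ hle)

lemma hasDerivAt_integral_mul_comp_rotation (hf : LipschitzWith K f) (hg : ContDiff ℝ 1 g)
    (ha : 0 ≤ a) (hg_le : ∀ x, |g x| ≤ C * Real.exp (a * ‖x‖))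
    (hg'_le : ∀ x, ‖fderiv ℝ g x‖ ≤ C * Real.exp (a * ‖x‖)) (θ : ℝ) :
    HasDerivAt
      (fun θ ↦ ∫ z, f z.1 * g (ContinuousLinearMap.rotation θ z).1
        ∂(stdGaussian E).prod (stdGaussian E))
      (∫ z, f z.1 * fderiv ℝ g (ContinuousLinearMap.rotation θ z).1
        (ContinuousLinearMap.rotation θ z).2 ∂(stdGaussian E).prod (stdGaussian E)) θ := by
  have hf0 := hf.continuous
  have hg0 := hg.continuous
  have hg1 := hg.continuous_fderiv_apply one_ne_zero
  have hC : 0 ≤ C := by simpa using (abs_nonneg _).trans (hg_le 0)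
  have g_le (w : E × E) : |g w.1| ≤ C * Real.exp (a * ‖w‖) :=
    (hg_le w.1).trans (by gcongr; exact norm_fst_le w)
  exact hasDerivAt_integral_of_norm_le_exp_mul_norm
    (fun θ ↦ integrable_of_norm_le_exp_mul_norm (by fun_prop)
      (abs_mul_comp_rotation_le hf ha g_le θ))
    (fun θ ↦ by fun_prop)
    (fun θ z ↦ ((hg.differentiable one_ne_zero _).hasFDerivAt.comp_hasDerivAt θ
      (hasDerivAt_rotation θ z).fst).const_mul (f z.1))
    (abs_mul_comp_rotation_le hf (by linarith) (abs_fderiv_apply_le ha hg'_le)) θ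

/- Undoing the rotation by its inverse turns the integral into one that can be integrated by
parts in the second variable. -/
lemma abs_integral_mul_fderiv_comp_rotation_le (hf : ContDiff ℝ 1 f) (hK : LipschitzWith K f)
    (hg : ContDiff ℝ 1 g) (ha : 0 ≤ a) (hg'_le : ∀ x, ‖fderiv ℝ g x‖ ≤ C * Real.exp (a * ‖x‖))
    (θ : ℝ) :
    |∫ z, f z.1 * fderiv ℝ g (ContinuousLinearMap.rotation θ z).1
        (ContinuousLinearMap.rotation θ z).2 ∂(stdGaussian E).prod (stdGaussian E)| ≤
      K * |Real.sin θ| * ∫ x, ‖fderiv ℝ g x‖ ∂stdGaussian E := by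
  have hf0 := hf.continuous
  have hg1 := hg.continuous_fderiv_apply one_ne_zero
  have rotate := integral_comp_rotation (f := fun w : E × E ↦
    f (ContinuousLinearMap.rotation (-θ) w).1 * fderiv ℝ g w.1 w.2) (by fun_prop) θ
  have hint : Integrable (fun w : E × E ↦
      f (ContinuousLinearMap.rotation (-θ) w).1 * fderiv ℝ g w.1 w.2)
      ((stdGaussian E).prod (stdGaussian E)) :=
    integrable_mul_of_lipschitzWith
      (hK.comp ((ContinuousLinearMap.fst ℝ E E).comp (.rotation (-θ))).lipschitz)
      hg1 (abs_fderiv_apply_le ha hg'_le)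
  simp only [rotation_neg_rotation_fst] at rotate
  rw [rotate, integral_prod _ hint, ← integral_const_mul, ← Real.norm_eq_abs]
  have hint' : Integrable (fun x ↦ ‖fderiv ℝ g x‖) (stdGaussian E) :=
    (integrable_of_norm_le_exp_mul_norm
      (hg.continuous_fderiv one_ne_zero).aestronglyMeasurable hg'_le).norm
  refine norm_integral_le_of_norm_le (hint'.const_mul _) (ae_of_all _ fun x ↦ ?_)
  have hsmooth : ContDiff ℝ 1 fun y : E ↦ f (Real.cos (-θ) • x + Real.sin (-θ) • y) :=
    hf.comp (by fun_prop)
  have hlip : LipschitzWith ‖Real.sin (-θ)‖₊ fun y : E ↦ Real.cos (-θ) • x + Real.sin (-θ) • y :=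
    .of_dist_le_mul fun y z ↦ by rw [dist_add_left, dist_smul₀, coe_nnnorm]
  simpa [ContinuousLinearMap.rotation_apply] using
    abs_integral_mul_dual_le hsmooth (hK.comp hlip) (fderiv ℝ g x)

/- For independent Gaussian `x`, `y`, the mean of `f x * g (cos θ • x + sin θ • y)` interpolates
between `∫ f * g` at `θ = 0` and `(∫ f) * (∫ g)` at `θ = π / 2`. -/
lemma integral_mul_sub_le (hf : ContDiff ℝ 1 f) (hK : LipschitzWith K f)
    (hg : ContDiff ℝ 1 g) (ha : 0 ≤ a) (hg_le : ∀ x, |g x| ≤ C * Real.exp (a * ‖x‖))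
    (hg'_le : ∀ x, ‖fderiv ℝ g x‖ ≤ C * Real.exp (a * ‖x‖)) :
    ∫ x, f x * g x ∂stdGaussian E - (∫ x, f x ∂stdGaussian E) * ∫ x, g x ∂stdGaussian E ≤
      K * ∫ x, ‖fderiv ℝ g x‖ ∂stdGaussian E := by
  set B := ∫ x, ‖fderiv ℝ g x‖ ∂stdGaussian E
  let h (θ : ℝ) : ℝ := ∫ z, f z.1 * g (ContinuousLinearMap.rotation θ z).1
    ∂(stdGaussian E).prod (stdGaussian E)
  have hderiv (θ : ℝ) := (hasDerivAt_integral_mul_comp_rotation hK hg ha hg_le hg'_le θ).sub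
    ((Real.hasDerivAt_cos θ).const_mul (K * B))
  have hmono : MonotoneOn (fun θ ↦ h θ - K * B * Real.cos θ) (Set.Icc 0 (Real.pi / 2)) := by
    refine monotoneOn_of_hasDerivWithinAt_nonneg (convex_Icc _ _)
      (fun θ _ ↦ (hderiv θ).continuousAt.continuousWithinAt)
      (fun θ _ ↦ (hderiv θ).hasDerivWithinAt) fun θ hθ ↦ ?_
    rw [interior_Icc] at hθ
    have hsin : 0 ≤ Real.sin θ :=
      Real.sin_nonneg_of_nonneg_of_le_pi hθ.1.le (by linarith [hθ.2, Real.pi_pos])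
    have := neg_le_of_abs_le (abs_integral_mul_fderiv_comp_rotation_le hf hK hg ha hg'_le θ)
    rw [abs_of_nonneg hsin] at this
    linarith
  have hzero : h 0 = ∫ x, f x * g x ∂stdGaussian E := by
    simpa [h, ContinuousLinearMap.rotation_apply] using
      integral_fun_fst (μ := stdGaussian E) (ν := stdGaussian E) fun x ↦ f x * g x
  have hpi : h (Real.pi / 2) = (∫ x, f x ∂stdGaussian E) * ∫ x, g x ∂stdGaussian E := by
    simpa [h, ContinuousLinearMap.rotation_apply] using
      integral_prod_mul (μ := stdGaussian E) (ν := stdGaussian E) f g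
  have := hmono (Set.left_mem_Icc.2 (by positivity)) (Set.right_mem_Icc.2 (by positivity))
    (by positivity)
  simp only [hzero, hpi, Real.cos_zero, Real.cos_pi_div_two] at this
  linarith

end Covariance

section Exponential

variable {E : Type*} [NormedAddCommGroup E] {f : E → ℝ} {K : NNReal}

lemma exp_mul_le_of_lipschitzWith (hK : LipschitzWith K f) (c : ℝ) (x : E) :
    Real.exp (c * f x) ≤ Real.exp (|c| * |f 0|) * Real.exp (|c| * K * ‖x‖) := by
  rw [← Real.exp_add, Real.exp_le_exp]
  calc c * f x ≤ |c| * |f x| := (le_abs_self _).trans (abs_mul _ _).le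
    _ ≤ |c| * (|f 0| + K * ‖x‖) := by gcongr; exact abs_le_add_mul_norm_of_lipschitzWith hK x
    _ = |c| * |f 0| + |c| * K * ‖x‖ := by ring

lemma norm_fderiv_exp_mul_le [NormedSpace ℝ E] (hf : Differentiable ℝ f) (hK : LipschitzWith K f)
    (c : ℝ) (x : E) :
    ‖fderiv ℝ (fun x ↦ Real.exp (c * f x)) x‖ ≤ |c| * K * Real.exp (c * f x) := by
  rw [((hf x).hasFDerivAt.const_mul c).exp.fderiv, norm_smul, norm_smul, Real.norm_eq_abs,
    Real.abs_exp, Real.norm_eq_abs, mul_comm]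
  gcongr
  exact norm_fderiv_le_of_lipschitz ℝ hK

end Exponential

lemma lipschitzWith_sqrt_norm_sq_add_sq (E : Type*) [NormedAddCommGroup E] (δ : ℝ) :
    LipschitzWith 1 fun x : E ↦ √(‖x‖ ^ 2 + δ ^ 2) := by
  have : (fun x : E ↦ √(‖x‖ ^ 2 + δ ^ 2)) = fun x ↦ ‖WithLp.toLp 2 (x, δ)‖ := by
    ext x; simp [WithLp.prod_norm_eq_of_L2]
  rw [this]
  refine .of_dist_le_mul fun x y ↦ (dist_norm_norm_le _ _).trans (le_of_eq ?_)
  simp [← WithLp.toLp_sub, dist_eq_norm]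

section Concentration

variable {E : Type*} [NormedAddCommGroup E] [InnerProductSpace ℝ E] [FiniteDimensional ℝ E]
  [MeasurableSpace E] [BorelSpace E] {f : E → ℝ} {K : NNReal}

lemma integrable_exp_mul_of_lipschitzWith (hK : LipschitzWith K f) (c : ℝ) :
    Integrable (fun x ↦ Real.exp (c * f x)) (stdGaussian E) :=
  integrable_of_norm_le_exp_mul_norm
    (Real.continuous_exp.comp (hK.continuous.const_mul c)).aestronglyMeasurable fun x ↦ by
      simpa only [Real.norm_eq_abs, Real.abs_exp] using exp_mul_le_of_lipschitzWith hK c x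

lemma integral_mul_exp_mul_le (hf : ContDiff ℝ 1 f) (hK : LipschitzWith K f) {c : ℝ}
    (hc : 0 ≤ c) :
    ∫ x, f x * Real.exp (c * f x) ∂stdGaussian E -
        (∫ x, f x ∂stdGaussian E) * ∫ x, Real.exp (c * f x) ∂stdGaussian E ≤
      K ^ 2 * c * ∫ x, Real.exp (c * f x) ∂stdGaussian E := by
  have hg_le (x : E) := exp_mul_le_of_lipschitzWith hK c x
  have hg'_le (x : E) := norm_fderiv_exp_mul_le (hf.differentiable one_ne_zero) hK c x
  rw [abs_of_nonneg hc] at hg_le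
  simp only [abs_of_nonneg hc] at hg'_le
  set D := Real.exp (c * |f 0|)
  calc ∫ x, f x * Real.exp (c * f x) ∂stdGaussian E -
        (∫ x, f x ∂stdGaussian E) * ∫ x, Real.exp (c * f x) ∂stdGaussian E
    _ ≤ K * ∫ x, ‖fderiv ℝ (fun x ↦ Real.exp (c * f x)) x‖ ∂stdGaussian E := by
      refine integral_mul_sub_le (C := (1 + c * K) * D) (a := c * K) hf hK (by fun_prop)
        (by positivity) (fun x ↦ ?_) fun x ↦ (hg'_le x).trans ?_
      · calc |Real.exp (c * f x)| ≤ 1 * D * Real.exp (c * K * ‖x‖) := by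
              rw [Real.abs_exp, one_mul]; exact hg_le x
          _ ≤ (1 + c * K) * D * Real.exp (c * K * ‖x‖) := by
              gcongr; exact le_add_of_nonneg_right (by positivity)
      · rw [mul_assoc (1 + c * K)]
        gcongr
        exacts [le_add_of_nonneg_left zero_le_one, hg_le x]
    _ ≤ K * ∫ x, c * K * Real.exp (c * f x) ∂stdGaussian E := by
      gcongr
      · exact ((integrable_exp_mul_of_lipschitzWith hK c).const_mul _).mono'
          (((show ContDiff ℝ 1 fun x ↦ Real.exp (c * f x) by fun_prop).continuous_fderiv
            one_ne_zero).norm.aestronglyMeasurable)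
          (ae_of_all _ fun x ↦ by simpa using hg'_le x)
      · exact (integrable_exp_mul_of_lipschitzWith hK c).const_mul _
      · exact fun x ↦ hg'_le x
    _ = K ^ 2 * c * ∫ x, Real.exp (c * f x) ∂stdGaussian E := by
      rw [integral_const_mul]; ring

/- By the previous inequality `M = mgf f` satisfies `M' ≤ K² c M`, so `M(c) exp (-K² c² / 2)` is
nonincreasing. -/
lemma mgf_le_exp_of_integral_eq_zero (hf : ContDiff ℝ 1 f) (hK : LipschitzWith K f)
    (hmean : ∫ x, f x ∂stdGaussian E = 0) {c : ℝ} (hc : 0 ≤ c) :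
    mgf f (stdGaussian E) c ≤ Real.exp (K ^ 2 * c ^ 2 / 2) := by
  have hset : integrableExpSet f (stdGaussian E) = Set.univ :=
    Set.eq_univ_of_forall (integrable_exp_mul_of_lipschitzWith hK)
  have hmgf (s : ℝ) := hasDerivAt_mgf (X := f) (μ := stdGaussian E) (t := s) (by simp [hset])
  have hderiv (s : ℝ) :=
    (hmgf s).mul (((hasDerivAt_pow 2 s).const_mul (-(K ^ 2 / 2 : ℝ))).exp)
  have hanti : AntitoneOn
      (fun s ↦ mgf f (stdGaussian E) s * Real.exp (-(K ^ 2 / 2) * s ^ 2)) (Set.Ici 0) := by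
    refine antitoneOn_of_hasDerivWithinAt_nonpos (convex_Ici _)
      (fun s _ ↦ (hderiv s).continuousAt.continuousWithinAt)
      (fun s _ ↦ (hderiv s).hasDerivWithinAt) fun s hs ↦ ?_
    rw [interior_Ici] at hs
    have hle := integral_mul_exp_mul_le hf hK (le_of_lt hs)
    rw [hmean, zero_mul, sub_zero] at hle
    calc _ = ((∫ x, f x * Real.exp (s * f x) ∂stdGaussian E) -
          K ^ 2 * s * ∫ x, Real.exp (s * f x) ∂stdGaussian E) *
            Real.exp (-(K ^ 2 / 2) * s ^ 2) := by simp only [mgf]; push_cast; ring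
      _ ≤ 0 := mul_nonpos_of_nonpos_of_nonneg (sub_nonpos.2 hle) (Real.exp_nonneg _)
  have hle_one := hanti Set.self_mem_Ici hc hc
  simp only [mgf_zero, ne_eq, OfNat.ofNat_ne_zero, not_false_eq_true, zero_pow, mul_zero,
    Real.exp_zero, mul_one] at hle_one
  calc mgf f (stdGaussian E) c
    _ = mgf f (stdGaussian E) c * Real.exp (-(K ^ 2 / 2) * c ^ 2) *
          Real.exp (K ^ 2 * c ^ 2 / 2) := by
      have hcancel : -(K ^ 2 / 2) * c ^ 2 + K ^ 2 * c ^ 2 / 2 = (0 : ℝ) := by ring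
      rw [mul_assoc, ← Real.exp_add, hcancel, Real.exp_zero, mul_one]
    _ ≤ Real.exp (K ^ 2 * c ^ 2 / 2) := mul_le_of_le_one_left (Real.exp_nonneg _) hle_one

lemma hasSubgaussianMGF_of_integral_eq_zero (hf : ContDiff ℝ 1 f) (hK : LipschitzWith K f)
    (hmean : ∫ x, f x ∂stdGaussian E = 0) : HasSubgaussianMGF f (K ^ 2) (stdGaussian E) where
  integrable_exp_mul := integrable_exp_mul_of_lipschitzWith hK
  mgf_le c := by
    push_cast
    obtain hc | hc := le_total 0 c
    · exact mgf_le_exp_of_integral_eq_zero hf hK hmean hc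
    · have hmean' : ∫ x, (-f) x ∂stdGaussian E = 0 := by
        simpa only [Pi.neg_apply, integral_neg, neg_eq_zero] using hmean
      have := mgf_le_exp_of_integral_eq_zero (f := -f) hf.neg hK.neg hmean' (neg_nonneg.2 hc)
      rwa [mgf_neg, neg_neg, neg_sq] at this

lemma measureReal_add_le_le_exp (hf : ContDiff ℝ 1 f) (hK : LipschitzWith K f) {r : ℝ}
    (hr : 0 ≤ r) :
    (stdGaussian E).real {x | (∫ y, f y ∂stdGaussian E) + r ≤ f x} ≤
      Real.exp (-r ^ 2 / (2 * K ^ 2)) := by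
  have hmean : ∫ x, f x - (∫ y, f y ∂stdGaussian E) ∂stdGaussian E = 0 := by
    rw [integral_sub (integrable_of_lipschitzWith hK) (integrable_const _)]; simp
  simpa [le_sub_iff_add_le'] using (hasSubgaussianMGF_of_integral_eq_zero (hf.sub contDiff_const)
    (hK.sub (.const _) |>.weaken (by simp)) hmean).measure_ge_le hr

lemma integral_sq_sub_sq_integral_le (hf : ContDiff ℝ 1 f) (hK : LipschitzWith K f) :
    ∫ x, f x ^ 2 ∂stdGaussian E - (∫ x, f x ∂stdGaussian E) ^ 2 ≤ K ^ 2 := by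
  have hg'_le (x : E) := norm_fderiv_le_of_lipschitz ℝ hK (x₀ := x)
  have key := integral_mul_sub_le (C := |f 0| + K) (a := 1) hf hK hf zero_le_one
    (fun x ↦ by simpa using abs_le_mul_exp_norm_of_lipschitzWith hK x)
    fun x ↦ (hg'_le x).trans <| by
      have := Real.one_le_exp (norm_nonneg x)
      rw [one_mul]
      nlinarith [abs_nonneg (f 0), K.2]
  have hint : ∫ x, ‖fderiv ℝ f x‖ ∂stdGaussian E ≤ K := by
    simpa using integral_mono_of_nonneg (μ := stdGaussian E) (ae_of_all _ fun x ↦ norm_nonneg _)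
      (integrable_const (K : ℝ)) (ae_of_all _ hg'_le)
  simp_rw [pow_two]
  exact key.trans (by gcongr)

/- The variance of the smooth, `1`-Lipschitz function `√(‖x‖² + δ²)` is at most `1`. -/
lemma sqrt_finrank_sub_one_le_integral_norm :
    √(Module.finrank ℝ E - 1) ≤ ∫ x, ‖x‖ ∂stdGaussian E := by
  refine le_of_forall_pos_le_add fun δ hδ ↦ ?_
  have hlip := lipschitzWith_sqrt_norm_sq_add_sq E δ
  have hsmooth : ContDiff ℝ 1 fun x : E ↦ √(‖x‖ ^ 2 + δ ^ 2) :=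
    ((contDiff_norm_sq ℝ).add contDiff_const).sqrt fun x ↦ by positivity
  have hint : Integrable (fun x : E ↦ ‖x‖) (stdGaussian E) := IsGaussian.integrable_fun_id.norm
  have hint_sq : Integrable (fun x : E ↦ ‖x‖ ^ 2) (stdGaussian E) :=
    IsGaussian.memLp_two_id.integrable_norm_pow two_ne_zero
  have hvar := integral_sq_sub_sq_integral_le hsmooth hlip
  have hsq : ∫ x : E, √(‖x‖ ^ 2 + δ ^ 2) ^ 2 ∂stdGaussian E = Module.finrank ℝ E + δ ^ 2 := by
    rw [integral_congr_ae (ae_of_all _ fun x : E ↦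
      Real.sq_sqrt (add_nonneg (sq_nonneg ‖x‖) (sq_nonneg δ))),
      integral_add hint_sq (integrable_const _), integral_norm_sq_stdGaussian]
    simp
  calc √(Module.finrank ℝ E - 1) ≤ ∫ x : E, √(‖x‖ ^ 2 + δ ^ 2) ∂stdGaussian E := by
        refine Real.sqrt_le_iff.2 ⟨integral_nonneg fun x ↦ Real.sqrt_nonneg _, ?_⟩
        push_cast at hvar
        nlinarith [sq_nonneg δ]
    _ ≤ ∫ x : E, (‖x‖ + δ) ∂stdGaussian E := by
        refine integral_mono (integrable_of_lipschitzWith hlip) (hint.add (integrable_const _))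
          fun x ↦ ?_
        exact Real.sqrt_le_iff.2 ⟨by positivity, by nlinarith [norm_nonneg x]⟩
    _ = ∫ x, ‖x‖ ∂stdGaussian E + δ := by rw [integral_add hint (integrable_const _)]; simp

lemma integral_norm_le_sqrt_finrank :
    ∫ x, ‖x‖ ∂stdGaussian E ≤ √(Module.finrank ℝ E) := by
  have hL2 : MemLp (fun x : E ↦ ‖x‖) 2 (stdGaussian E) := IsGaussian.memLp_two_id.norm
  rw [← integral_norm_sq_stdGaussian]
  refine Real.le_sqrt_of_sq_le ?_
  have := variance_nonneg (fun x : E ↦ ‖x‖) (stdGaussian E)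
  rw [variance_eq_sub hL2] at this
  exact sub_nonneg.1 this

end Concentration

section InnerFamily

variable {ι E : Type*} [NormedAddCommGroup E] [InnerProductSpace ℝ E]

/-- The coefficients of a vector against a family `p`. Under the standard Gaussian measure this is
the centered Gaussian vector whose covariance is the Gram matrix of `p`. -/
def innerFamily (p : ι → E) : E →L[ℝ] ι → ℝ :=
  ContinuousLinearMap.pi fun a ↦ innerSL ℝ (p a)

lemma innerFamily_apply (p : ι → E) (x : E) (a : ι) : innerFamily p x a = ⟪p a, x⟫ := rfl

lemma smul_innerFamily_add_smul_innerFamily (p q : ι → E) (s t : ℝ) :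
    s • innerFamily p + t • innerFamily q = innerFamily fun a ↦ s • p a + t • q a := by
  ext x a
  simp [innerFamily_apply, inner_add_left, real_inner_smul_left]

lemma inner_cos_smul_add_sin_smul {p q : ι → E} (hpq : ∀ a b, ⟪p a, q b⟫ = 0) (θ : ℝ) (a b : ι) :
    ⟪Real.cos θ • p b + Real.sin θ • q b, -Real.sin θ • p a + Real.cos θ • q a⟫ =
      Real.sin θ * Real.cos θ * (⟪q b, q a⟫ - ⟪p b, p a⟫) := by
  have hqp : ⟪q b, p a⟫ = 0 := by rw [real_inner_comm]; exact hpq a b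
  simp only [inner_add_left, inner_add_right, real_inner_smul_left, real_inner_smul_right, hpq,
    hqp]
  ring

variable [Fintype ι]

lemma norm_innerFamily_le {p : ι → E} {C : ℝ} (hC : 0 ≤ C) (hp : ∀ a, ‖p a‖ ≤ C) :
    ‖innerFamily p‖ ≤ C :=
  ContinuousLinearMap.opNorm_le_bound _ hC fun x ↦
    (pi_norm_le_iff_of_nonneg (by positivity)).2 fun a ↦
      (abs_real_inner_le_norm (p a) x).trans (by gcongr; exact hp a)

lemma dual_innerFamily [DecidableEq ι] (p : ι → E) (L : StrongDual ℝ (ι → ℝ)) (x : E) :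
    L (innerFamily p x) = ⟪∑ a, L (Pi.single a 1) • p a, x⟫ := by
  conv_lhs => rw [← Finset.univ_sum_single (innerFamily p x), map_sum]
  rw [sum_inner]
  refine Finset.sum_congr rfl fun a _ ↦ ?_
  rw [show Pi.single a (innerFamily p x a) = innerFamily p x a • Pi.single (M := fun _ ↦ ℝ) a 1 by
    simp [← Pi.single_smul], map_smul, real_inner_smul_left, smul_eq_mul, mul_comm,
    innerFamily_apply]

variable [FiniteDimensional ℝ E] [MeasurableSpace E] [BorelSpace E]

lemma charFunDual_map_innerFamily [DecidableEq ι] (p : ι → E) (L : StrongDual ℝ (ι → ℝ)) :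
    charFunDual ((stdGaussian E).map (innerFamily p)) L =
      Complex.exp (-(∑ a, ∑ b, L (Pi.single a 1) * L (Pi.single b 1) * ⟪p a, p b⟫ : ℝ) / 2) := by
  have hnorm : ‖∑ a, L (Pi.single a 1) • p a‖ ^ 2 =
      ∑ a, ∑ b, L (Pi.single a 1) * L (Pi.single b 1) * ⟪p a, p b⟫ := by
    simp_rw [← real_inner_self_eq_norm_sq, sum_inner, inner_sum, real_inner_smul_left,
      real_inner_smul_right, mul_assoc]
  have hL : L.comp (innerFamily p) =
      InnerProductSpace.toDualMap ℝ E (∑ a, L (Pi.single a 1) • p a) := by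
    ext x; exact dual_innerFamily p L x
  rw [charFunDual_map, hL, ← charFun_eq_charFunDual_toDualMap, charFun_stdGaussian, ← hnorm]
  push_cast
  rfl

lemma map_innerFamily_congr {F : Type*} [NormedAddCommGroup F] [InnerProductSpace ℝ F]
    [FiniteDimensional ℝ F] [MeasurableSpace F] [BorelSpace F] {κ : Type*} [Finite κ]
    {p : κ → E} {q : κ → F}
    (h : ∀ a b, ⟪p a, p b⟫ = ⟪q a, q b⟫) :
    (stdGaussian E).map (innerFamily p) = (stdGaussian F).map (innerFamily q) := by
  classical
  cases nonempty_fintype κ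
  refine Measure.ext_of_charFunDual (funext fun L ↦ ?_)
  simp only [charFunDual_map_innerFamily, h]

lemma integral_comp_innerFamily_congr {F : Type*} [NormedAddCommGroup F] [InnerProductSpace ℝ F]
    [FiniteDimensional ℝ F] [MeasurableSpace F] [BorelSpace F] {κ : Type*} [Finite κ]
    {p : κ → E} {q : κ → F}
    (h : ∀ a b, ⟪p a, p b⟫ = ⟪q a, q b⟫) {Φ : (κ → ℝ) → ℝ} (hΦ : Continuous Φ) :
    ∫ x, Φ (innerFamily p x) ∂stdGaussian E = ∫ x, Φ (innerFamily q x) ∂stdGaussian F := by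
  rw [← integral_map (by fun_prop) hΦ.aestronglyMeasurable, map_innerFamily_congr h,
    integral_map (by fun_prop) hΦ.aestronglyMeasurable]

lemma integrable_comp_innerFamily {Φ : (ι → ℝ) → ℝ} {K : NNReal} (hK : LipschitzWith K Φ)
    (p : ι → E) : Integrable (fun x ↦ Φ (innerFamily p x)) (stdGaussian E) :=
  integrable_of_lipschitzWith (hK.comp (innerFamily p).lipschitz)

lemma integrable_fderiv_comp_innerFamily_apply {d : (ι → ℝ) → ℝ} {K : NNReal}
    (hd : ContDiff ℝ 1 d) (hK : LipschitzWith K d) (p : ι → E) (v : ι → ℝ) :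
    Integrable (fun x ↦ fderiv ℝ d (innerFamily p x) v) (stdGaussian E) := by
  have hcont : Continuous fun x ↦ fderiv ℝ d (innerFamily p x) v :=
    ((hd.continuous_fderiv one_ne_zero).comp (innerFamily p).continuous).clm_apply
      continuous_const
  exact .of_bound hcont.aestronglyMeasurable (K * ‖v‖) (ae_of_all _ fun x ↦
    ContinuousLinearMap.le_of_opNorm_le _ (norm_fderiv_le_of_lipschitz ℝ hK) v)

lemma integral_comp_innerFamily_mul_inner [DecidableEq ι] {d : (ι → ℝ) → ℝ} {K : NNReal}
    (hd : ContDiff ℝ 1 d) (hK : LipschitzWith K d) (p : ι → E) (v : E) :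
    ∫ x, d (innerFamily p x) * ⟪v, x⟫ ∂stdGaussian E =
      ∑ b, ⟪p b, v⟫ * ∫ x, fderiv ℝ d (innerFamily p x) (Pi.single b 1) ∂stdGaussian E := by
  have hderiv (x : E) : fderiv ℝ (fun x ↦ d (innerFamily p x)) x v =
      ∑ b, ⟪p b, v⟫ * fderiv ℝ d (innerFamily p x) (Pi.single b 1) := by
    have hcomp : HasFDerivAt (fun x ↦ d (innerFamily p x)) _ x :=
      (hd.differentiable one_ne_zero _).hasFDerivAt.comp x (innerFamily p).hasFDerivAt
    rw [hcomp.fderiv, ContinuousLinearMap.comp_apply, dual_innerFamily, sum_inner]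
    simp_rw [real_inner_smul_left, mul_comm]
  rw [integral_mul_inner_stdGaussian (f := fun x ↦ d (innerFamily p x))
    (hd.comp (innerFamily p).contDiff) (hK.comp (innerFamily p).lipschitz)]
  simp_rw [hderiv]
  rw [integral_finsetSum _ fun b _ ↦
    (integrable_fderiv_comp_innerFamily_apply hd hK p _).const_mul _]
  simp_rw [integral_const_mul]

lemma measureReal_integral_add_le_comp_innerFamily_le {Φ : (ι → ℝ) → ℝ} (hΦ : ContDiff ℝ 1 Φ)
    (hK : LipschitzWith 1 Φ) {p : ι → E} (hp : ∀ a, ‖p a‖ ≤ 1) {r : ℝ} (hr : 0 ≤ r) :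
    (stdGaussian E).real
        {x | (∫ y, Φ (innerFamily p y) ∂stdGaussian E) + r ≤ Φ (innerFamily p x)} ≤
      Real.exp (-r ^ 2 / 2) := by
  have hlip : LipschitzWith 1 fun x ↦ Φ (innerFamily p x) :=
    (hK.comp (innerFamily p).lipschitz).weaken
      ((one_mul _).trans_le (norm_innerFamily_le zero_le_one hp))
  simpa using measureReal_add_le_le_exp (f := fun x ↦ Φ (innerFamily p x))
    (hΦ.comp (innerFamily p).contDiff) hlip hr

lemma measureReal_comp_innerFamily_le_integral_sub_le {Φ : (ι → ℝ) → ℝ} (hΦ : ContDiff ℝ 1 Φ)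
    (hK : LipschitzWith 1 Φ) {p : ι → E} (hp : ∀ a, ‖p a‖ ≤ 1) {r : ℝ} (hr : 0 ≤ r) :
    (stdGaussian E).real
        {x | Φ (innerFamily p x) ≤ (∫ y, Φ (innerFamily p y) ∂stdGaussian E) - r} ≤
      Real.exp (-r ^ 2 / 2) := by
  convert measureReal_integral_add_le_comp_innerFamily_le hΦ.neg hK.neg hp hr using 4 with x
  rw [integral_neg]
  constructor <;> intro h <;> linarith

end InnerFamily

section Comparison

lemma hasDerivAt_integral_comp_cos_smul_add_sin_smul {E F : Type*} [NormedAddCommGroup E]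
    [NormedSpace ℝ E] [CompleteSpace E] [SecondCountableTopology E] [MeasurableSpace E]
    [BorelSpace E] {μ : Measure E} [IsGaussian μ] [NormedAddCommGroup F] [NormedSpace ℝ F]
    {Φ : F → ℝ} {K : NNReal} (hΦ : ContDiff ℝ 1 Φ) (hK : LipschitzWith K Φ) (P Q : E →L[ℝ] F)
    (θ : ℝ) :
    HasDerivAt (fun θ ↦ ∫ x, Φ ((Real.cos θ • P + Real.sin θ • Q) x) ∂μ)
      (∫ x, fderiv ℝ Φ ((Real.cos θ • P + Real.sin θ • Q) x)
        ((-Real.sin θ • P + Real.cos θ • Q) x) ∂μ) θ := by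
  have hΦ' := hΦ.continuous_fderiv_apply one_ne_zero
  refine hasDerivAt_integral_of_norm_le_exp_mul_norm (C := K * (‖P‖ + ‖Q‖)) (a := 1)
    (f := fun θ x ↦ Φ ((Real.cos θ • P + Real.sin θ • Q) x))
    (f' := fun θ x ↦ fderiv ℝ Φ ((Real.cos θ • P + Real.sin θ • Q) x)
        ((-Real.sin θ • P + Real.cos θ • Q) x))
    (fun θ ↦ integrable_of_lipschitzWith
      (hK.comp (Real.cos θ • P + Real.sin θ • Q).lipschitz))
    (fun θ ↦ by fun_prop) (fun θ x ↦ ?_) (fun θ x ↦ ?_) θ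
  · exact (hΦ.differentiable one_ne_zero _).hasFDerivAt.comp_hasDerivAt θ
      (((Real.hasDerivAt_cos θ).smul_const (P x)).add ((Real.hasDerivAt_sin θ).smul_const (Q x)))
  · have hvel : ‖-Real.sin θ • P + Real.cos θ • Q‖ ≤ ‖P‖ + ‖Q‖ := by
      refine (norm_add_le _ _).trans (add_le_add ?_ ?_) <;> rw [norm_smul, Real.norm_eq_abs]
      · exact mul_le_of_le_one_left (norm_nonneg P) (by simpa using Real.abs_sin_le_one θ)
      · exact mul_le_of_le_one_left (norm_nonneg Q) (Real.abs_cos_le_one θ)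
    calc |fderiv ℝ Φ ((Real.cos θ • P + Real.sin θ • Q) x)
          ((-Real.sin θ • P + Real.cos θ • Q) x)|
      _ ≤ K * ((‖P‖ + ‖Q‖) * ‖x‖) :=
        (ContinuousLinearMap.le_of_opNorm_le _ (norm_fderiv_le_of_lipschitz ℝ hK) _).trans
          (by gcongr; exact ContinuousLinearMap.le_of_opNorm_le _ hvel x)
      _ ≤ K * (‖P‖ + ‖Q‖) * Real.exp (1 * ‖x‖) := by
        rw [mul_assoc, one_mul]
        gcongr
        linarith [Real.add_one_le_exp ‖x‖]

variable {ι E : Type*} [Fintype ι] [DecidableEq ι] [NormedAddCommGroup E] [InnerProductSpace ℝ E]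
  [FiniteDimensional ℝ E] [MeasurableSpace E] [BorelSpace E]
  {Φ : (ι → ℝ) → ℝ} {d : ι → (ι → ℝ) → ℝ} {K K' : NNReal}

lemma integral_fderiv_comp_innerFamily_apply
    (hd : ∀ y, HasFDerivAt Φ (∑ a, d a y • ContinuousLinearMap.proj (R := ℝ) a) y)
    (hd_smooth : ∀ a, ContDiff ℝ 1 (d a)) (hd_lip : ∀ a, LipschitzWith K (d a)) (p v : ι → E) :
    ∫ x, fderiv ℝ Φ (innerFamily p x) (innerFamily v x) ∂stdGaussian E =
      ∑ a, ∑ b, ⟪p b, v a⟫ *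
        ∫ x, fderiv ℝ (d a) (innerFamily p x) (Pi.single b 1) ∂stdGaussian E := by
  have hexpand (x : E) : fderiv ℝ Φ (innerFamily p x) (innerFamily v x) =
      ∑ a, d a (innerFamily p x) * ⟪v a, x⟫ := by
    simp [(hd _).fderiv, innerFamily_apply]
  have hint (a : ι) : Integrable (fun x ↦ d a (innerFamily p x) * ⟪v a, x⟫) (stdGaussian E) :=
    integrable_of_norm_le_exp_mul_norm
      (((hd_smooth a).continuous.comp (innerFamily p).continuous).mul
        (continuous_const.inner continuous_id)).aestronglyMeasurable
      (abs_mul_inner_le_of_lipschitzWith ((hd_lip a).comp (innerFamily p).lipschitz) (v a))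
  simp_rw [hexpand]
  rw [integral_finsetSum _ fun a _ ↦ hint a]
  exact Finset.sum_congr rfl fun a _ ↦
    integral_comp_innerFamily_mul_inner (hd_smooth a) (hd_lip a) p (v a)

lemma integral_fderiv_comp_cos_smul_add_sin_smul
    (hd : ∀ y, HasFDerivAt Φ (∑ a, d a y • ContinuousLinearMap.proj (R := ℝ) a) y)
    (hd_smooth : ∀ a, ContDiff ℝ 1 (d a)) (hd_lip : ∀ a, LipschitzWith K (d a)) {p q : ι → E}
    (hpq : ∀ a b, ⟪p a, q b⟫ = 0) (θ : ℝ) :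
    ∫ x, fderiv ℝ Φ ((Real.cos θ • innerFamily p + Real.sin θ • innerFamily q) x)
        ((-Real.sin θ • innerFamily p + Real.cos θ • innerFamily q) x) ∂stdGaussian E =
      Real.sin θ * Real.cos θ * ∫ x, ∑ a, ∑ b, (⟪q b, q a⟫ - ⟪p b, p a⟫) *
        fderiv ℝ (d a) ((Real.cos θ • innerFamily p + Real.sin θ • innerFamily q) x)
          (Pi.single b 1) ∂stdGaussian E := by
  have hint (a b : ι) := integrable_fderiv_comp_innerFamily_apply (hd_smooth a) (hd_lip a)
    (fun a ↦ Real.cos θ • p a + Real.sin θ • q a) (Pi.single b 1)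
  rw [smul_innerFamily_add_smul_innerFamily, smul_innerFamily_add_smul_innerFamily,
    integral_fderiv_comp_innerFamily_apply hd hd_smooth hd_lip,
    integral_finsetSum _ fun a _ ↦ integrable_finsetSum _ fun b _ ↦ (hint a b).const_mul _]
  simp_rw [integral_finsetSum _ fun b _ ↦ (hint _ b).const_mul _, inner_cos_smul_add_sin_smul hpq,
    integral_const_mul, mul_assoc, ← Finset.mul_sum]

lemma integral_comp_innerFamily_le_of_orthogonal (hK : LipschitzWith K Φ)
    (hd : ∀ y, HasFDerivAt Φ (∑ a, d a y • ContinuousLinearMap.proj (R := ℝ) a) y)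
    (hd_smooth : ∀ a, ContDiff ℝ 1 (d a)) (hd_lip : ∀ a, LipschitzWith K' (d a)) {p q : ι → E}
    (hpq : ∀ a b, ⟪p a, q b⟫ = 0)
    (hgram : ∀ y, ∑ a, ∑ b, (⟪q b, q a⟫ - ⟪p b, p a⟫) * fderiv ℝ (d a) y (Pi.single b 1) ≤ 0) :
    ∫ x, Φ (innerFamily q x) ∂stdGaussian E ≤ ∫ x, Φ (innerFamily p x) ∂stdGaussian E := by
  have hΦ : ContDiff ℝ 1 Φ := contDiff_one_iff_hasFDerivAt.2 ⟨_, by fun_prop, hd⟩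
  let H (θ : ℝ) : ℝ :=
    ∫ x, Φ ((Real.cos θ • innerFamily p + Real.sin θ • innerFamily q) x) ∂stdGaussian E
  have hderiv (θ : ℝ) := hasDerivAt_integral_comp_cos_smul_add_sin_smul (μ := stdGaussian E) hΦ hK
    (innerFamily p) (innerFamily q) θ
  have hanti : AntitoneOn H (Set.Icc 0 (Real.pi / 2)) := by
    refine antitoneOn_of_hasDerivWithinAt_nonpos (convex_Icc _ _)
      (fun θ _ ↦ (hderiv θ).continuousAt.continuousWithinAt)
      (fun θ _ ↦ (hderiv θ).hasDerivWithinAt) fun θ hθ ↦ ?_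
    rw [interior_Icc] at hθ
    rw [integral_fderiv_comp_cos_smul_add_sin_smul hd hd_smooth hd_lip hpq]
    have hsin : 0 ≤ Real.sin θ :=
      Real.sin_nonneg_of_nonneg_of_le_pi hθ.1.le (by linarith [hθ.2, Real.pi_pos])
    have hcos : 0 ≤ Real.cos θ :=
      Real.cos_nonneg_of_mem_Icc ⟨by linarith [hθ.1, Real.pi_pos], hθ.2.le⟩
    exact mul_nonpos_of_nonneg_of_nonpos (mul_nonneg hsin hcos) (integral_nonpos fun x ↦ hgram _)
  simpa [H] using hanti (Set.left_mem_Icc.2 (by positivity)) (Set.right_mem_Icc.2 (by positivity))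
    (by positivity)

lemma integral_comp_innerFamily_le {F : Type*} [NormedAddCommGroup F] [InnerProductSpace ℝ F]
    [FiniteDimensional ℝ F] [MeasurableSpace F] [BorelSpace F] (hK : LipschitzWith K Φ)
    (hd : ∀ y, HasFDerivAt Φ (∑ a, d a y • ContinuousLinearMap.proj (R := ℝ) a) y)
    (hd_smooth : ∀ a, ContDiff ℝ 1 (d a)) (hd_lip : ∀ a, LipschitzWith K' (d a))
    {p : ι → E} {q : ι → F}
    (hgram : ∀ y, ∑ a, ∑ b, (⟪q b, q a⟫ - ⟪p b, p a⟫) * fderiv ℝ (d a) y (Pi.single b 1) ≤ 0) :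
    ∫ x, Φ (innerFamily q x) ∂stdGaussian F ≤ ∫ x, Φ (innerFamily p x) ∂stdGaussian E := by
  let p' (a : ι) : WithLp 2 (E × F) := .toLp 2 (p a, 0)
  let q' (a : ι) : WithLp 2 (E × F) := .toLp 2 (0, q a)
  have hp (a b : ι) : ⟪p' a, p' b⟫ = ⟪p a, p b⟫ := by simp [p']
  have hq (a b : ι) : ⟪q' a, q' b⟫ = ⟪q a, q b⟫ := by simp [q']
  rw [← integral_comp_innerFamily_congr hp hK.continuous,
    ← integral_comp_innerFamily_congr hq hK.continuous]
  refine integral_comp_innerFamily_le_of_orthogonal hK hd hd_smooth hd_lip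
    (fun a b ↦ by simp [p', q']) fun y ↦ ?_
  simpa only [hp, hq] using hgram y

end Comparison

section SoftMax

variable {ι : Type*} [Fintype ι] {β : ℝ}

/-- The smooth maximum `β⁻¹ log ∑ exp (β y a)`, which tends to `max y` as `β → ∞` and to `min y` as
`β → -∞`. -/
def softMax (β : ℝ) (y : ι → ℝ) : ℝ := β⁻¹ * Real.log (∑ a, Real.exp (β * y a))

/-- The Gibbs weights at inverse temperature `β`: the partial derivatives of `softMax β`. -/
def gibbs (β : ℝ) (y : ι → ℝ) (a : ι) : ℝ := Real.exp (β * (y a - softMax β y))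

lemma gibbs_pos (β : ℝ) (y : ι → ℝ) (a : ι) : 0 < gibbs β y a := Real.exp_pos _

lemma softMax_neg (β : ℝ) (y : ι → ℝ) : softMax (-β) (fun a ↦ -y a) = -softMax β y := by
  simp [softMax, inv_neg]

lemma mul_softMax (hβ : β ≠ 0) (y : ι → ℝ) :
    β * softMax β y = Real.log (∑ a, Real.exp (β * y a)) := mul_inv_cancel_left₀ hβ _

variable [Nonempty ι]

lemma gibbs_eq_div (hβ : β ≠ 0) (y : ι → ℝ) (a : ι) :
    gibbs β y a = Real.exp (β * y a) / ∑ b, Real.exp (β * y b) := by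
  rw [gibbs, mul_sub, mul_softMax hβ, Real.exp_sub, Real.exp_log (by positivity)]

lemma sum_gibbs (hβ : β ≠ 0) (y : ι → ℝ) : ∑ a, gibbs β y a = 1 := by
  simp_rw [gibbs_eq_div hβ, ← Finset.sum_div]
  exact div_self (by positivity)

lemma gibbs_le_one (hβ : β ≠ 0) (y : ι → ℝ) (a : ι) : gibbs β y a ≤ 1 := by
  rw [← sum_gibbs hβ y]
  exact Finset.single_le_sum (fun b _ ↦ (gibbs_pos β y b).le) (Finset.mem_univ a)

lemma softMax_add_const (hβ : β ≠ 0) (y : ι → ℝ) (c : ℝ) :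
    softMax β (fun a ↦ y a + c) = softMax β y + c := by
  simp_rw [softMax, mul_add, Real.exp_add, ← Finset.sum_mul]
  rw [Real.log_mul (by positivity) (by positivity), Real.log_exp]
  field_simp

lemma le_softMax (hβ : 0 < β) (y : ι → ℝ) (a : ι) : y a ≤ softMax β y := by
  rw [softMax, le_inv_mul_iff₀ hβ, Real.le_log_iff_exp_le (by positivity)]
  exact Finset.single_le_sum (f := fun a ↦ Real.exp (β * y a)) (fun _ _ ↦ (Real.exp_pos _).le)
    (Finset.mem_univ a)

lemma softMax_neg_le (hβ : 0 < β) (y : ι → ℝ) (a : ι) : softMax (-β) y ≤ y a := by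
  have h := le_softMax hβ (fun a ↦ -y a) a
  rw [← neg_neg β, softMax_neg] at h
  exact neg_le_neg_iff.1 h

lemma softMax_le (hβ : 0 < β) {y : ι → ℝ} {T : ℝ} (hy : ∀ a, y a ≤ T) :
    softMax β y ≤ T + Real.log (Fintype.card ι) / β := by
  calc softMax β y ≤ β⁻¹ * Real.log (Fintype.card ι * Real.exp (β * T)) := by
        rw [softMax, ← nsmul_eq_mul]
        gcongr
        exact Finset.sum_le_card_nsmul _ _ _ fun a _ ↦ by gcongr; exact hy a
    _ = T + Real.log (Fintype.card ι) / β := by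
        rw [Real.log_mul (by simp) (by positivity), Real.log_exp]
        field_simp
        ring

lemma hasFDerivAt_softMax (hβ : β ≠ 0) (y : ι → ℝ) :
    HasFDerivAt (softMax β : (ι → ℝ) → ℝ)
      (∑ a, gibbs β y a • ContinuousLinearMap.proj (R := ℝ) (φ := fun _ ↦ ℝ) a) y := by
  have hexp (a : ι) : HasFDerivAt (fun y : ι → ℝ ↦ Real.exp (β * y a))
      (Real.exp (β * y a) • β • ContinuousLinearMap.proj (R := ℝ) (φ := fun _ ↦ ℝ) a) y :=
    HasFDerivAt.exp (HasFDerivAt.const_mul (hasFDerivAt_apply a y) β)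
  convert! ((HasFDerivAt.fun_sum fun a _ ↦ hexp a).log (by positivity)).const_mul β⁻¹ using 1
  ext v
  simp only [gibbs_eq_div hβ, _root_.smul_apply, _root_.sum_apply, smul_eq_mul, Finset.mul_sum,
    ContinuousLinearMap.proj_apply]
  refine Finset.sum_congr rfl fun a _ ↦ ?_
  field_simp

lemma contDiff_softMax (β : ℝ) {n : WithTop ℕ∞} : ContDiff ℝ n (softMax β : (ι → ℝ) → ℝ) :=
  contDiff_const.mul ((ContDiff.sum fun a _ ↦ by fun_prop).log fun y ↦ by positivity)

lemma lipschitzWith_softMax (hβ : β ≠ 0) : LipschitzWith 1 (softMax β : (ι → ℝ) → ℝ) := by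
  refine lipschitzWith_of_nnnorm_fderiv_le
    (fun y ↦ (hasFDerivAt_softMax hβ y).differentiableAt) fun y ↦ ?_
  rw [(hasFDerivAt_softMax hβ y).fderiv]
  refine ContinuousLinearMap.opNorm_le_bound _ zero_le_one fun v ↦ ?_
  calc ‖(∑ a, gibbs β y a • ContinuousLinearMap.proj (R := ℝ) (φ := fun _ ↦ ℝ) a) v‖
      = ‖∑ a, gibbs β y a * v a‖ := by simp
    _ ≤ ∑ a, gibbs β y a * ‖v‖ := norm_sum_le_of_le _ fun a _ ↦ by
        rw [norm_mul, Real.norm_of_nonneg (gibbs_pos β y a).le]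
        gcongr
        exacts [(gibbs_pos β y a).le, norm_le_pi_norm v a]
    _ = 1 * ‖v‖ := by rw [← Finset.sum_mul, sum_gibbs hβ]

end SoftMax

section NestedSoftMax

lemma lipschitzWith_exp_of_nonpos {X : Type*} [PseudoMetricSpace X] {f : X → ℝ} {K : NNReal}
    (hK : LipschitzWith K f) (hf : ∀ x, f x ≤ 0) : LipschitzWith K fun x ↦ Real.exp (f x) := by
  refine LipschitzWith.of_le_add_mul K fun x y ↦ ?_
  have hexp : Real.exp (f y) = Real.exp (f x) * Real.exp (f y - f x) := by
    rw [← Real.exp_add, add_sub_cancel]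
  have hdiff : Real.exp (f x) * (f x - f y) ≤ K * dist x y :=
    calc Real.exp (f x) * (f x - f y) ≤ Real.exp (f x) * |f x - f y| := by
          gcongr; exact le_abs_self _
      _ ≤ |f x - f y| := mul_le_of_le_one_left (abs_nonneg _) (Real.exp_le_one_iff.2 (hf x))
      _ ≤ K * dist x y := hK.dist_le_mul x y
  have htangent := mul_le_mul_of_nonneg_left (Real.add_one_le_exp (f y - f x))
    (Real.exp_pos (f x)).le
  linarith

variable {I J : Type*} [Fintype J] {α β : ℝ}

lemma hasFDerivAt_softMax_row [Finite I] [Nonempty J] (hβ : β ≠ 0) (z : I × J → ℝ) (i : I) :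
    HasFDerivAt (fun z : I × J → ℝ ↦ softMax β fun j ↦ z (i, j))
      (∑ j, gibbs β (fun j ↦ z (i, j)) j •
        ContinuousLinearMap.proj (R := ℝ) (φ := fun _ : I × J ↦ ℝ) (i, j)) z := by
  cases nonempty_fintype I
  have hrow : HasFDerivAt (fun (z : I × J → ℝ) j ↦ z (i, j))
      (ContinuousLinearMap.pi fun j ↦ ContinuousLinearMap.proj (i, j)) z :=
    hasFDerivAt_pi.2 fun j ↦ hasFDerivAt_apply (𝕜 := ℝ) (F' := fun _ : I × J ↦ ℝ) (i, j) z
  convert! (hasFDerivAt_softMax hβ fun j ↦ z (i, j)).comp z hrow using 1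
  ext v
  simp

variable [Fintype I]

/-- The smooth maximum over the first index of the smooth maxima over the second one. For
`α < 0 < β` it approximates `min_i max_j z (i, j)`. -/
def nestedSoftMax (α β : ℝ) (z : I × J → ℝ) : ℝ := softMax α fun i ↦ softMax β fun j ↦ z (i, j)

/-- The partial derivatives of `nestedSoftMax α β`, which are again probability weights. -/
def nestedGibbs (α β : ℝ) (z : I × J → ℝ) (a : I × J) : ℝ :=
  gibbs α (fun i ↦ softMax β fun j ↦ z (i, j)) a.1 * gibbs β (fun j ↦ z (a.1, j)) a.2

lemma nestedGibbs_pos (α β : ℝ) (z : I × J → ℝ) (a : I × J) : 0 < nestedGibbs α β z a :=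
  mul_pos (gibbs_pos _ _ _) (gibbs_pos _ _ _)

lemma nestedGibbs_eq_exp (α β : ℝ) (z : I × J → ℝ) (a : I × J) :
    nestedGibbs α β z a = Real.exp (α * ((softMax β fun j ↦ z (a.1, j)) - nestedSoftMax α β z) +
      β * (z a - softMax β fun j ↦ z (a.1, j))) := (Real.exp_add _ _).symm

variable [Nonempty J]

lemma lipschitzWith_softMax_row (hβ : β ≠ 0) (i : I) :
    LipschitzWith 1 fun z : I × J → ℝ ↦ softMax β fun j ↦ z (i, j) := by
  have hrow : LipschitzWith 1 fun (z : I × J → ℝ) j ↦ z (i, j) :=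
    .of_edist_le fun y z ↦ edist_pi_le_iff.2 fun j ↦ edist_le_pi_edist y z (i, j)
  exact ((lipschitzWith_softMax hβ).comp hrow).weaken (mul_one 1).le

variable [Nonempty I]

lemma nestedGibbs_le_one (hα : α ≠ 0) (hβ : β ≠ 0) (z : I × J → ℝ) (a : I × J) :
    nestedGibbs α β z a ≤ 1 :=
  mul_le_one₀ (gibbs_le_one hα _ _) (gibbs_pos _ _ _).le (gibbs_le_one hβ _ _)

lemma nestedSoftMax_add_const (hα : α ≠ 0) (hβ : β ≠ 0) (z : I × J → ℝ) (c : ℝ) :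
    nestedSoftMax α β (fun a ↦ z a + c) = nestedSoftMax α β z + c := by
  simp only [nestedSoftMax, softMax_add_const hβ, softMax_add_const hα]

lemma nestedSoftMax_add (hα : α ≠ 0) (hβ : β ≠ 0) (v : I → ℝ) (u : J → ℝ) :
    nestedSoftMax α β (fun a ↦ v a.1 + u a.2) = softMax α v + softMax β u := by
  simp only [nestedSoftMax, add_comm (v _), softMax_add_const hβ]
  simp only [add_comm (softMax β u), softMax_add_const hα]

lemma hasFDerivAt_nestedSoftMax (hα : α ≠ 0) (hβ : β ≠ 0) (z : I × J → ℝ) :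
    HasFDerivAt (nestedSoftMax α β)
      (∑ a, nestedGibbs α β z a • ContinuousLinearMap.proj (R := ℝ) (φ := fun _ ↦ ℝ) a) z := by
  convert! (hasFDerivAt_softMax hα fun i ↦ softMax β fun j ↦ z (i, j)).comp z
    (hasFDerivAt_pi.2 fun i ↦ hasFDerivAt_softMax_row hβ z i) using 1
  ext v
  simp [nestedGibbs, Fintype.sum_prod_type, Finset.mul_sum, mul_assoc]

lemma lipschitzWith_nestedSoftMax (hα : α ≠ 0) (hβ : β ≠ 0) :
    LipschitzWith 1 (nestedSoftMax α β : (I × J → ℝ) → ℝ) := by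
  have hrows : LipschitzWith 1 fun (z : I × J → ℝ) i ↦ softMax β fun j ↦ z (i, j) :=
    .of_edist_le fun y z ↦ edist_pi_le_iff.2 fun i ↦
      (lipschitzWith_softMax_row hβ i y z).trans_eq (one_mul _)
  exact ((lipschitzWith_softMax hα).comp hrows).weaken (mul_one 1).le

lemma le_nestedSoftMax (hα : 0 < α) (hβ : 0 < β) (z : I × J → ℝ) (a : I × J) :
    z a ≤ nestedSoftMax α β z :=
  (le_softMax hβ (fun j ↦ z (a.1, j)) a.2).trans
    (le_softMax hα (fun i ↦ softMax β fun j ↦ z (i, j)) a.1)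

lemma nestedSoftMax_neg_le (hα : 0 < α) (hβ : 0 < β) {z : I × J → ℝ} {i : I} {T : ℝ}
    (hz : ∀ j, z (i, j) ≤ T) : nestedSoftMax (-α) β z ≤ T + Real.log (Fintype.card J) / β :=
  (softMax_neg_le hα _ i).trans (softMax_le hβ hz)

lemma contDiff_nestedSoftMax (α β : ℝ) {n : WithTop ℕ∞} :
    ContDiff ℝ n (nestedSoftMax α β : (I × J → ℝ) → ℝ) :=
  (contDiff_softMax α).comp (contDiff_pi.2 fun i ↦
    (contDiff_softMax β).comp (contDiff_pi.2 fun j ↦ contDiff_apply ℝ ℝ (i, j)))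

lemma contDiff_nestedGibbs (α β : ℝ) (a : I × J) {n : WithTop ℕ∞} :
    ContDiff ℝ n fun z ↦ nestedGibbs α β z a := by
  have hrow : ContDiff ℝ n fun z : I × J → ℝ ↦ softMax β fun j ↦ z (a.1, j) :=
    (contDiff_softMax β).comp (contDiff_pi.2 fun j ↦ contDiff_apply ℝ ℝ (a.1, j))
  simp only [nestedGibbs_eq_exp]
  exact ((contDiff_const.mul (hrow.sub (contDiff_nestedSoftMax α β))).add
    (contDiff_const.mul ((contDiff_apply ℝ ℝ a).sub hrow))).exp

lemma fderiv_nestedGibbs (hα : α ≠ 0) (hβ : β ≠ 0) (z v : I × J → ℝ) (a : I × J) :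
    fderiv ℝ (fun z ↦ nestedGibbs α β z a) z v = nestedGibbs α β z a *
      (α * (∑ j, gibbs β (fun j ↦ z (a.1, j)) j * v (a.1, j) - ∑ b, nestedGibbs α β z b * v b) +
        β * (v a - ∑ j, gibbs β (fun j ↦ z (a.1, j)) j * v (a.1, j))) := by
  have hrow := hasFDerivAt_softMax_row hβ z a.1
  have hexp := (((hrow.fun_sub (hasFDerivAt_nestedSoftMax hα hβ z)).const_mul α).fun_add
    (((hasFDerivAt_apply a z).fun_sub hrow).const_mul β)).exp
  simp_rw [← nestedGibbs_eq_exp] at hexp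
  rw [hexp.fderiv]
  simp [mul_add]

lemma fderiv_nestedGibbs_single_of_ne [DecidableEq I] [DecidableEq J] (hα : α ≠ 0) (hβ : β ≠ 0)
    (z : I × J → ℝ) {a b : I × J} (hab : a.1 ≠ b.1) :
    fderiv ℝ (fun z ↦ nestedGibbs α β z a) z (Pi.single b 1) =
      -(α * (nestedGibbs α β z a * nestedGibbs α β z b)) := by
  have hrow (j : J) : Pi.single (M := fun _ ↦ ℝ) b 1 (a.1, j) = 0 :=
    Pi.single_eq_of_ne (i' := (a.1, j)) (fun h ↦ hab (Prod.ext_iff.1 h).1) 1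
  rw [fderiv_nestedGibbs hα hβ]
  simp only [hrow]
  simp only [Pi.single_apply, mul_zero, mul_ite, mul_one, Finset.sum_const_zero,
    Finset.sum_ite_eq', Finset.mem_univ, if_true]
  ring

lemma lipschitzWith_nestedGibbs (hα : α ≠ 0) (hβ : β ≠ 0) (a : I × J) :
    LipschitzWith (‖α‖₊ * (1 + 1) + ‖β‖₊ * (1 + 1)) fun z ↦ nestedGibbs α β z a := by
  have hrow := lipschitzWith_softMax_row (I := I) (J := J) hβ a.1
  have hlog := ((lipschitzWith_smul α).comp (hrow.sub (lipschitzWith_nestedSoftMax hα hβ))).add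
    ((lipschitzWith_smul β).comp ((LipschitzWith.eval a).sub hrow))
  simp only [nestedGibbs_eq_exp]
  refine lipschitzWith_exp_of_nonpos hlog fun z ↦ ?_
  rw [← Real.exp_le_one_iff, ← nestedGibbs_eq_exp]
  exact nestedGibbs_le_one hα hβ z a

end NestedSoftMax

section Gordon

lemma exists_log_div_le (n : ℕ) {ε : ℝ} (hε : 0 < ε) : ∃ α > 0, Real.log n / α ≤ ε := by
  have hα : 0 < (Real.log n + 1) / ε :=
    div_pos (by linarith [Real.log_natCast_nonneg n]) hε
  refine ⟨_, hα, ?_⟩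
  rw [div_le_iff₀ hα, mul_div_cancel₀ _ hε.ne']
  exact le_add_of_nonneg_right zero_le_one

variable {I J E F H : Type*} [NormedAddCommGroup E] [InnerProductSpace ℝ E]
  [NormedAddCommGroup F] [InnerProductSpace ℝ F] [NormedAddCommGroup H] [InnerProductSpace ℝ H]
  {α β : ℝ} {x : I → E} {u : J → F} {b : I × J → H}

lemma norm_le_one_of_inner_eq_mul_inner (hx : ∀ i, ‖x i‖ = 1) (hu : ∀ j, ‖u j‖ ≤ 1)
    (hb : ∀ a c, ⟪b a, b c⟫ = ⟪x a.1, x c.1⟫ * ⟪u a.2, u c.2⟫) (a : I × J) : ‖b a‖ ≤ 1 := by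
  have hsq : ‖b a‖ ^ 2 = ‖u a.2‖ ^ 2 := by
    rw [← real_inner_self_eq_norm_sq, hb]
    simp [hx]
  rw [sq_eq_sq₀ (norm_nonneg _) (norm_nonneg _)] at hsq
  exact hsq.trans_le (hu _)

variable [FiniteDimensional ℝ E] [MeasurableSpace E] [BorelSpace E]
  [FiniteDimensional ℝ F] [MeasurableSpace F] [BorelSpace F]
  [FiniteDimensional ℝ H] [MeasurableSpace H] [BorelSpace H]
  [Fintype J] [Nonempty J]

lemma integral_softMax_innerFamily_le (hβ : 0 < β) {u : J → F} {φ : F → ℝ}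
    (hφ : Integrable φ (stdGaussian F)) (hu : ∀ j y, ⟪u j, y⟫ ≤ φ y) :
    ∫ y, softMax β (innerFamily u y) ∂stdGaussian F ≤
      ∫ y, φ y ∂stdGaussian F + Real.log (Fintype.card J) / β := by
  have hle (y : F) := softMax_le (y := innerFamily u y) hβ fun j ↦ hu j y
  refine (integral_mono (integrable_comp_innerFamily (lipschitzWith_softMax hβ.ne') u)
    (hφ.add (integrable_const _)) hle).trans_eq ?_
  simp [integral_add hφ (integrable_const _)]

variable [Fintype I] [Nonempty I]

lemma integral_nestedSoftMax_innerFamily_le (hα : α ≠ 0) (hβ : β ≠ 0) {p : I × J → E}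
    {q : I × J → F} (hrow : ∀ a b, a.1 = b.1 → ⟪q a, q b⟫ = ⟪p a, p b⟫)
    (hgram : ∀ a b, 0 ≤ α * (⟪q a, q b⟫ - ⟪p a, p b⟫)) :
    ∫ x, nestedSoftMax α β (innerFamily q x) ∂stdGaussian F ≤
      ∫ x, nestedSoftMax α β (innerFamily p x) ∂stdGaussian E := by
  classical
  refine integral_comp_innerFamily_le (lipschitzWith_nestedSoftMax hα hβ)
    (d := fun a z ↦ nestedGibbs α β z a) (hasFDerivAt_nestedSoftMax hα hβ)
    (fun a ↦ contDiff_nestedGibbs α β a) (lipschitzWith_nestedGibbs hα hβ)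
    fun z ↦ Finset.sum_nonpos fun a _ ↦ Finset.sum_nonpos fun b _ ↦ ?_
  by_cases hab : a.1 = b.1
  · rw [hrow b a hab.symm, sub_self, zero_mul]
  · have hw := mul_pos (nestedGibbs_pos α β z a) (nestedGibbs_pos α β z b)
    rw [fderiv_nestedGibbs_single_of_ne hα hβ z hab]
    linarith [mul_nonneg (hgram b a) hw.le]

lemma integral_nestedSoftMax_innerFamily_add_const (hα : α ≠ 0) (hβ : β ≠ 0) (b : I × J → H) :
    ∫ z, nestedSoftMax α β (innerFamily (fun a ↦ WithLp.toLp 2 (b a, (1 : ℝ))) z)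
        ∂stdGaussian (WithLp 2 (H × ℝ)) =
      ∫ x, nestedSoftMax α β (innerFamily b x) ∂stdGaussian H := by
  let b' (a : I × J) : WithLp 2 (H × ℝ) := .toLp 2 (b a, 0)
  let e : WithLp 2 (H × ℝ) := .toLp 2 (0, 1)
  have hsplit (z : WithLp 2 (H × ℝ)) :
      nestedSoftMax α β (innerFamily (fun a ↦ WithLp.toLp 2 (b a, (1 : ℝ))) z) =
        nestedSoftMax α β (innerFamily b' z) + innerSL ℝ e z := by
    rw [← nestedSoftMax_add_const hα hβ]
    congr 1 with a
    simp [innerFamily_apply, b', e]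
  simp_rw [hsplit]
  rw [integral_add (integrable_comp_innerFamily (lipschitzWith_nestedSoftMax hα hβ) b')
      (IsGaussian.integrable_dual _ _),
    integral_strongDual_stdGaussian, add_zero,
    integral_comp_innerFamily_congr (q := b) (fun _ _ ↦ by simp [b'])
      (lipschitzWith_nestedSoftMax hα hβ).continuous]

lemma integral_nestedSoftMax_innerFamily_prod (hα : α ≠ 0) (hβ : β ≠ 0) (x : I → E) (u : J → F) :
    ∫ z, nestedSoftMax α β (innerFamily (fun a ↦ WithLp.toLp 2 (x a.1, u a.2)) z)
        ∂stdGaussian (WithLp 2 (E × F)) =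
      ∫ y, softMax α (innerFamily x y) ∂stdGaussian E +
        ∫ y, softMax β (innerFamily u y) ∂stdGaussian F := by
  let x' (i : I) : WithLp 2 (E × F) := .toLp 2 (x i, 0)
  let u' (j : J) : WithLp 2 (E × F) := .toLp 2 (0, u j)
  have hsplit (z : WithLp 2 (E × F)) :
      nestedSoftMax α β (innerFamily (fun a : I × J ↦ WithLp.toLp 2 (x a.1, u a.2)) z) =
        softMax α (innerFamily x' z) + softMax β (innerFamily u' z) := by
    rw [← nestedSoftMax_add hα hβ]
    congr 1 with a
    simp [innerFamily_apply, x', u']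
  simp_rw [hsplit]
  rw [integral_add (integrable_comp_innerFamily (lipschitzWith_softMax hα) x')
      (integrable_comp_innerFamily (lipschitzWith_softMax hβ) u'),
    integral_comp_innerFamily_congr (q := x) (fun _ _ ↦ by simp [x'])
      (lipschitzWith_softMax hα).continuous,
    integral_comp_innerFamily_congr (q := u) (fun _ _ ↦ by simp [u'])
      (lipschitzWith_softMax hβ).continuous]

lemma mul_integral_nestedSoftMax_le (hα : α ≠ 0) (hβ : β ≠ 0) (hx : ∀ i, ‖x i‖ = 1)
    (hu : ∀ j, ‖u j‖ ≤ 1)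
    (hb : ∀ a c, ⟪b a, b c⟫ = ⟪x a.1, x c.1⟫ * ⟪u a.2, u c.2⟫) :
    α * ∫ h, nestedSoftMax α β (innerFamily b h) ∂stdGaussian H ≤
      α * (∫ y, softMax α (innerFamily x y) ∂stdGaussian E +
        ∫ y, softMax β (innerFamily u y) ∂stdGaussian F) := by
  let B (a : I × J) : WithLp 2 (H × ℝ) := .toLp 2 (b a, 1)
  let D (a : I × J) : WithLp 2 (E × F) := .toLp 2 (x a.1, u a.2)
  have hdiff (a c : I × J) :
      ⟪B a, B c⟫ - ⟪D a, D c⟫ = (1 - ⟪x a.1, x c.1⟫) * (1 - ⟪u a.2, u c.2⟫) := by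
    simp [B, D, hb]
    ring
  have hgram (a c : I × J) : 0 ≤ ⟪B a, B c⟫ - ⟪D a, D c⟫ := by
    rw [hdiff]
    refine mul_nonneg (sub_nonneg.2 ?_) (sub_nonneg.2 ?_)
    · simpa [hx] using real_inner_le_norm (x a.1) (x c.1)
    · exact (real_inner_le_norm _ _).trans (mul_le_one₀ (hu _) (norm_nonneg _) (hu _))
  have hrow (a c : I × J) (hac : a.1 = c.1) : ⟪B a, B c⟫ = ⟪D a, D c⟫ := by
    have hself : ⟪x a.1, x c.1⟫ = 1 := by simp [hac, hx]
    rw [← sub_eq_zero, hdiff, hself, sub_self, zero_mul]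
  rw [← integral_nestedSoftMax_innerFamily_add_const hα hβ,
    ← integral_nestedSoftMax_innerFamily_prod hα hβ]
  rcases hα.lt_or_gt with hneg | hpos
  · refine mul_le_mul_of_nonpos_left (integral_nestedSoftMax_innerFamily_le (p := B) (q := D)
      hα hβ (fun a c hac ↦ (hrow a c hac).symm) fun a c ↦ ?_) hneg.le
    exact mul_nonneg_of_nonpos_of_nonpos hneg.le (by linarith [hgram a c])
  · exact mul_le_mul_of_nonneg_left (integral_nestedSoftMax_innerFamily_le (p := D) (q := B)
      hα hβ hrow fun a c ↦ mul_nonneg hpos.le (hgram a c)) hpos.le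

lemma exists_integral_nestedSoftMax_le {φ : F → ℝ} {ψ : E → ℝ} {ε : ℝ}
    (hx : ∀ i, ‖x i‖ = 1) (hu : ∀ j, ‖u j‖ ≤ 1)
    (hb : ∀ a c, ⟪b a, b c⟫ = ⟪x a.1, x c.1⟫ * ⟪u a.2, u c.2⟫)
    (hψ : Integrable ψ (stdGaussian E)) (hφ : Integrable φ (stdGaussian F))
    (hxψ : ∀ i y, ⟪x i, y⟫ ≤ ψ y) (huφ : ∀ j y, ⟪u j, y⟫ ≤ φ y) (hε : 0 < ε) :
    ∃ α > 0, ∫ h, nestedSoftMax α α (innerFamily b h) ∂stdGaussian H ≤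
      ∫ y, ψ y ∂stdGaussian E + ∫ y, φ y ∂stdGaussian F + ε := by
  obtain ⟨α, hα, hlog⟩ := exists_log_div_le (Fintype.card I * Fintype.card J) hε
  rw [Nat.cast_mul, Real.log_mul (by simp) (by simp), add_div] at hlog
  refine ⟨α, hα, ?_⟩
  have hcompare := le_of_mul_le_mul_left (mul_integral_nestedSoftMax_le hα.ne' hα.ne' hx hu hb) hα
  linarith [integral_softMax_innerFamily_le hα hψ hxψ, integral_softMax_innerFamily_le hα hφ huφ]

lemma exists_le_integral_nestedSoftMax {φ : F → ℝ} {ψ : E → ℝ} {ε : ℝ}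
    (hx : ∀ i, ‖x i‖ = 1) (hu : ∀ j, ‖u j‖ ≤ 1)
    (hb : ∀ a c, ⟪b a, b c⟫ = ⟪x a.1, x c.1⟫ * ⟪u a.2, u c.2⟫)
    (hψ : Integrable ψ (stdGaussian E)) (hφ : Integrable φ (stdGaussian F))
    (hxψ : ∀ i y, -⟪x i, y⟫ ≤ ψ y) (huφ : ∀ y, ∃ j, φ y ≤ ⟪u j, y⟫) (hε : 0 < ε) :
    ∃ α > 0, Real.log (Fintype.card J) / α ≤ ε ∧
      ∫ y, φ y ∂stdGaussian F - ∫ y, ψ y ∂stdGaussian E - ε ≤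
        ∫ h, nestedSoftMax (-α) α (innerFamily b h) ∂stdGaussian H := by
  obtain ⟨α, hα, hlog⟩ := exists_log_div_le (Fintype.card I * Fintype.card J) hε
  rw [Nat.cast_mul, Real.log_mul (by simp) (by simp), add_div] at hlog
  have hlogI : 0 ≤ Real.log (Fintype.card I) / α := by positivity
  have hlogJ : 0 ≤ Real.log (Fintype.card J) / α := by positivity
  refine ⟨α, hα, by linarith, ?_⟩
  have hcompare := mul_integral_nestedSoftMax_le (neg_ne_zero.2 hα.ne') hα.ne' hx hu hb
  rw [neg_mul, neg_mul, neg_le_neg_iff, mul_le_mul_iff_right₀ hα] at hcompare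
  have hmin : ∫ y, softMax (-α) (innerFamily x y) ∂stdGaussian E =
      -∫ y, softMax α (innerFamily (fun i ↦ -x i) y) ∂stdGaussian E := by
    rw [← integral_neg]
    congr with y
    rw [← softMax_neg]
    congr with i
    simp [innerFamily_apply]
  have hmin_le := integral_softMax_innerFamily_le hα (u := fun i ↦ -x i) hψ
    fun i y ↦ by simpa using hxψ i y
  have hmax_le : ∫ y, φ y ∂stdGaussian F ≤ ∫ y, softMax α (innerFamily u y) ∂stdGaussian F := by
    refine integral_mono hφ (integrable_comp_innerFamily (lipschitzWith_softMax hα.ne') u)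
      fun y ↦ ?_
    obtain ⟨j, hj⟩ := huφ y
    exact hj.trans (le_softMax hα (innerFamily u y) j)
  linarith

end Gordon

section GordonFinite

variable {I J E F H : Type*} [Finite I] [Nonempty I] [Finite J] [Nonempty J]
  [NormedAddCommGroup E] [InnerProductSpace ℝ E] [FiniteDimensional ℝ E] [MeasurableSpace E]
  [BorelSpace E] [NormedAddCommGroup F] [InnerProductSpace ℝ F] [FiniteDimensional ℝ F]
  [MeasurableSpace F] [BorelSpace F] [NormedAddCommGroup H] [InnerProductSpace ℝ H]
  [FiniteDimensional ℝ H] [MeasurableSpace H] [BorelSpace H]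
  {x : I → E} {u : J → F} {b : I × J → H}

lemma integral_le_of_exists_le_inner {φ : F → ℝ} {ψ : E → ℝ} {χ : H → ℝ}
    (hx : ∀ i, ‖x i‖ = 1) (hu : ∀ j, ‖u j‖ ≤ 1)
    (hb : ∀ a c, ⟪b a, b c⟫ = ⟪x a.1, x c.1⟫ * ⟪u a.2, u c.2⟫)
    (hψ : Integrable ψ (stdGaussian E)) (hφ : Integrable φ (stdGaussian F))
    (hxψ : ∀ i y, ⟪x i, y⟫ ≤ ψ y) (huφ : ∀ j y, ⟪u j, y⟫ ≤ φ y)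
    (hχ : Integrable χ (stdGaussian H)) (hbχ : ∀ h, ∃ a, χ h ≤ ⟪b a, h⟫) :
    ∫ h, χ h ∂stdGaussian H ≤ ∫ y, ψ y ∂stdGaussian E + ∫ y, φ y ∂stdGaussian F := by
  cases nonempty_fintype I
  cases nonempty_fintype J
  refine le_of_forall_pos_le_add fun ε hε ↦ ?_
  obtain ⟨α, hα, hle⟩ := exists_integral_nestedSoftMax_le hx hu hb hψ hφ hxψ huφ hε
  refine le_trans (integral_mono hχ
    (integrable_comp_innerFamily (lipschitzWith_nestedSoftMax hα.ne' hα.ne') b) fun h ↦ ?_) hle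
  obtain ⟨a, ha⟩ := hbχ h
  exact ha.trans (le_nestedSoftMax hα hα (innerFamily b h) a)

lemma measureReal_exists_le_inner_le {φ : F → ℝ} {ψ : E → ℝ} {r ε : ℝ}
    (hx : ∀ i, ‖x i‖ = 1) (hu : ∀ j, ‖u j‖ ≤ 1)
    (hb : ∀ a c, ⟪b a, b c⟫ = ⟪x a.1, x c.1⟫ * ⟪u a.2, u c.2⟫)
    (hψ : Integrable ψ (stdGaussian E)) (hφ : Integrable φ (stdGaussian F))
    (hxψ : ∀ i y, ⟪x i, y⟫ ≤ ψ y) (huφ : ∀ j y, ⟪u j, y⟫ ≤ φ y) (hr : 0 ≤ r) (hε : 0 < ε) :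
    (stdGaussian H).real
        {h | ∃ a, ∫ y, ψ y ∂stdGaussian E + ∫ y, φ y ∂stdGaussian F + ε + r ≤ ⟪b a, h⟫} ≤
      Real.exp (-r ^ 2 / 2) := by
  cases nonempty_fintype I
  cases nonempty_fintype J
  obtain ⟨α, hα, hle⟩ := exists_integral_nestedSoftMax_le hx hu hb hψ hφ hxψ huφ hε
  refine le_trans (measureReal_mono ?_) (measureReal_integral_add_le_comp_innerFamily_le
    (contDiff_nestedSoftMax α α) (lipschitzWith_nestedSoftMax hα.ne' hα.ne')
    (norm_le_one_of_inner_eq_mul_inner hx hu hb) hr)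
  rintro h ⟨a, ha⟩
  have hmax := le_nestedSoftMax hα hα (innerFamily b h) a
  rw [innerFamily_apply] at hmax
  rw [Set.mem_ofPred_eq]
  linarith

lemma measureReal_exists_forall_inner_le_le {φ : F → ℝ} {ψ : E → ℝ} {r ε : ℝ}
    (hx : ∀ i, ‖x i‖ = 1) (hu : ∀ j, ‖u j‖ ≤ 1)
    (hb : ∀ a c, ⟪b a, b c⟫ = ⟪x a.1, x c.1⟫ * ⟪u a.2, u c.2⟫)
    (hψ : Integrable ψ (stdGaussian E)) (hφ : Integrable φ (stdGaussian F))
    (hxψ : ∀ i y, -⟪x i, y⟫ ≤ ψ y) (huφ : ∀ y, ∃ j, φ y ≤ ⟪u j, y⟫) (hr : 0 ≤ r) (hε : 0 < ε) :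
    (stdGaussian H).real
        {h | ∃ i, ∀ j, ⟪b (i, j), h⟫ ≤
          ∫ y, φ y ∂stdGaussian F - ∫ y, ψ y ∂stdGaussian E - ε - r} ≤
      Real.exp (-r ^ 2 / 2) := by
  cases nonempty_fintype I
  cases nonempty_fintype J
  obtain ⟨α, hα, hlog, hle⟩ :=
    exists_le_integral_nestedSoftMax hx hu hb hψ hφ hxψ huφ (half_pos hε)
  refine le_trans (measureReal_mono ?_) (measureReal_comp_innerFamily_le_integral_sub_le
    (contDiff_nestedSoftMax (-α) α)
    (lipschitzWith_nestedSoftMax (neg_ne_zero.2 hα.ne') hα.ne')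
    (norm_le_one_of_inner_eq_mul_inner hx hu hb) hr)
  rintro h ⟨i, hi⟩
  have hmin := nestedSoftMax_neg_le hα hα (z := innerFamily b h) hi
  rw [Set.mem_ofPred_eq]
  linarith

end GordonFinite

section Nets

variable {E F : Type*} [NormedAddCommGroup E] [InnerProductSpace ℝ E] [NormedAddCommGroup F]
  [InnerProductSpace ℝ F]

lemma exists_finset_forall_exists_mul_norm_le_inner (E : Type*) [NormedAddCommGroup E]
    [InnerProductSpace ℝ E] [FiniteDimensional ℝ E] [Nontrivial E] {c : ℝ} (hc : c < 1) :
    ∃ s : Finset E, (∀ u ∈ s, ‖u‖ = 1) ∧ ∀ v, ∃ u ∈ s, c * ‖v‖ ≤ ⟪u, v⟫ := by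
  obtain ⟨t, ht, htfin, hcover⟩ :=
    (isCompact_sphere (0 : E) 1).finite_cover_balls (sub_pos.2 hc)
  have hnear {w : E} (hw : ‖w‖ = 1) : ∃ u ∈ t, ‖w - u‖ < 1 - c := by
    simpa [dist_eq_norm] using hcover (mem_sphere_zero_iff_norm.2 hw)
  refine ⟨htfin.toFinset, fun u hu ↦ by simpa using ht (htfin.mem_toFinset.1 hu), fun v ↦ ?_⟩
  obtain rfl | hv := eq_or_ne v 0
  · obtain ⟨w, hw⟩ := exists_norm_eq E zero_le_one
    obtain ⟨u, hu, -⟩ := hnear hw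
    exact ⟨u, htfin.mem_toFinset.2 hu, by simp⟩
  · obtain ⟨u, hu, huv⟩ := hnear (norm_smul_inv_norm (𝕜 := ℝ) hv)
    refine ⟨u, htfin.mem_toFinset.2 hu, ?_⟩
    have hself : ⟪((‖v‖ : ℝ)⁻¹) • v, v⟫ = ‖v‖ := by
      rw [real_inner_smul_left, real_inner_self_eq_norm_sq]
      field_simp
    have hclose := (real_inner_le_norm (((‖v‖ : ℝ)⁻¹) • v - u) v).trans
      (mul_le_mul_of_nonneg_right huv.le (norm_nonneg v))
    rw [inner_sub_left, hself] at hclose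
    linarith

variable {I J : Type*} [Finite I] [Nonempty I] [Finite J] [Nonempty J]

lemma exists_sq_mul_opNorm_le_inner {x : I → E} {u : J → F} {c : ℝ} (hc : 0 < c)
    (hx : ∀ v, ∃ i, c * ‖v‖ ≤ ⟪x i, v⟫) (hu : ∀ w, ∃ j, c * ‖w‖ ≤ ⟪u j, w⟫)
    [CompleteSpace E] [CompleteSpace F] (T : E →L[ℝ] F) :
    ∃ a : I × J, c ^ 2 * ‖T‖ ≤ ⟪u a.2, T (x a.1)⟫ := by
  obtain ⟨a, ha⟩ := Finite.exists_max fun a : I × J ↦ ⟪u a.2, T (x a.1)⟫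
  have hadjoint (j : J) : c * ‖T.adjoint (u j)‖ ≤ ⟪u a.2, T (x a.1)⟫ := by
    obtain ⟨i, hi⟩ := hx (T.adjoint (u j))
    rw [ContinuousLinearMap.adjoint_inner_right, real_inner_comm] at hi
    exact hi.trans (ha (i, j))
  have happly (v : E) : c ^ 2 * ‖T v‖ ≤ ⟪u a.2, T (x a.1)⟫ * ‖v‖ := by
    obtain ⟨j, hj⟩ := hu (T v)
    calc c ^ 2 * ‖T v‖ = c * (c * ‖T v‖) := by ring
      _ ≤ c * (‖T.adjoint (u j)‖ * ‖v‖) := by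
          rw [← ContinuousLinearMap.adjoint_inner_left] at hj
          exact mul_le_mul_of_nonneg_left (hj.trans (real_inner_le_norm _ _)) hc.le
      _ ≤ ⟪u a.2, T (x a.1)⟫ * ‖v‖ := by
          rw [← mul_assoc]
          gcongr
          exact hadjoint j
  refine ⟨a, ?_⟩
  have hnonneg : 0 ≤ ⟪u a.2, T (x a.1)⟫ :=
    (mul_nonneg hc.le (norm_nonneg _)).trans (hadjoint a.2)
  rw [← le_div_iff₀' (by positivity)]
  refine T.opNorm_le_bound (by positivity) fun v ↦ ?_
  rw [div_mul_eq_mul_div, le_div_iff₀' (by positivity)]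
  exact happly v

end Nets

section GaussianMatrix

variable {M N : Type*} [Fintype M] [Fintype N]

/-- The rank-one matrix `u xᵀ`, as a vector of entries. -/
def outerProduct (u : EuclideanSpace ℝ M) (x : EuclideanSpace ℝ N) : EuclideanSpace ℝ (M × N) :=
  .toLp 2 fun a ↦ u a.1 * x a.2

lemma inner_outerProduct_outerProduct (u u' : EuclideanSpace ℝ M) (x x' : EuclideanSpace ℝ N) :
    ⟪outerProduct u x, outerProduct u' x'⟫ = ⟪x, x'⟫ * ⟪u, u'⟫ := by
  simp only [outerProduct, PiLp.inner_apply, Fintype.sum_prod_type, Finset.sum_mul_sum,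
    RCLike.inner_apply, conj_trivial]
  rw [Finset.sum_comm]
  exact Finset.sum_congr rfl fun e _ ↦ Finset.sum_congr rfl fun k _ ↦ by ring

variable [DecidableEq N]

/-- The linear map `EuclideanSpace ℝ N → EuclideanSpace ℝ M` whose matrix has the entries of `h`.
It is a Gaussian matrix when `h` is a standard Gaussian vector. -/
def matrixMap : EuclideanSpace ℝ (M × N) →L[ℝ] EuclideanSpace ℝ N →L[ℝ] EuclideanSpace ℝ M :=
  LinearMap.toContinuousLinearMap
    { toFun h := (Matrix.toEuclideanLin (Matrix.of fun k e ↦ h (k, e))).toContinuousLinearMap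
      map_add' g h := by ext; simp [Matrix.mulVec, dotProduct, add_mul, Finset.sum_add_distrib]
      map_smul' c h := by ext; simp [Matrix.mulVec, dotProduct, mul_assoc, Finset.mul_sum] }

lemma matrixMap_apply (h : EuclideanSpace ℝ (M × N)) (x : EuclideanSpace ℝ N) (k : M) :
    matrixMap h x k = ∑ e, h (k, e) * x e := rfl

lemma inner_outerProduct (u : EuclideanSpace ℝ M) (x : EuclideanSpace ℝ N)
    (h : EuclideanSpace ℝ (M × N)) : ⟪outerProduct u x, h⟫ = ⟪u, matrixMap h x⟫ := by
  simp only [outerProduct, PiLp.inner_apply, Fintype.sum_prod_type, matrixMap_apply,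
    Finset.sum_mul, RCLike.inner_apply, conj_trivial]
  exact Finset.sum_congr rfl fun k _ ↦ Finset.sum_congr rfl fun e _ ↦ by ring

variable (M N) in
lemma integrable_norm_matrixMap :
    Integrable (fun h : EuclideanSpace ℝ (M × N) ↦ ‖matrixMap h‖)
      (stdGaussian (EuclideanSpace ℝ (M × N))) :=
  (matrixMap.integrable_comp (φ := fun h : EuclideanSpace ℝ (M × N) ↦ h)
    IsGaussian.integrable_fun_id).norm

lemma sq_mul_integral_norm_matrixMap_le [Nonempty M] [Nonempty N] {c : ℝ} (hc₀ : 0 < c)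
    (hc₁ : c < 1) :
    c ^ 2 * ∫ h, ‖matrixMap h‖ ∂stdGaussian (EuclideanSpace ℝ (M × N)) ≤
      √(Fintype.card N) + √(Fintype.card M) := by
  obtain ⟨s, hs, hsnet⟩ :=
    exists_finset_forall_exists_mul_norm_le_inner (EuclideanSpace ℝ N) hc₁
  obtain ⟨t, ht, htnet⟩ :=
    exists_finset_forall_exists_mul_norm_le_inner (EuclideanSpace ℝ M) hc₁
  have : Nonempty s := let ⟨u, hu, _⟩ := hsnet 0; ⟨⟨u, hu⟩⟩
  have : Nonempty t := let ⟨u, hu, _⟩ := htnet 0; ⟨⟨u, hu⟩⟩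
  have hcompare : ∫ h, c ^ 2 * ‖matrixMap h‖ ∂stdGaussian (EuclideanSpace ℝ (M × N)) ≤
      ∫ y, ‖y‖ ∂stdGaussian (EuclideanSpace ℝ N) +
        ∫ y, ‖y‖ ∂stdGaussian (EuclideanSpace ℝ M) := by
    refine integral_le_of_exists_le_inner (x := fun x : s ↦ x.1) (u := fun u : t ↦ u.1)
      (b := fun a ↦ outerProduct a.2.1 a.1.1) (fun x ↦ hs _ x.2) (fun u ↦ (ht _ u.2).le)
      (fun a b ↦ inner_outerProduct_outerProduct _ _ _ _)
      IsGaussian.integrable_fun_id.norm IsGaussian.integrable_fun_id.norm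
      (fun x y ↦ by simpa [hs _ x.2] using real_inner_le_norm x.1 y)
      (fun u y ↦ by simpa [ht _ u.2] using real_inner_le_norm u.1 y)
      ((integrable_norm_matrixMap M N).const_mul _) fun h ↦ ?_
    simp_rw [inner_outerProduct]
    exact exists_sq_mul_opNorm_le_inner (x := fun x : s ↦ x.1) (u := fun u : t ↦ u.1) hc₀
      (by simpa using hsnet) (by simpa using htnet) (matrixMap h)
  have hN := integral_norm_le_sqrt_finrank (E := EuclideanSpace ℝ N)
  have hM := integral_norm_le_sqrt_finrank (E := EuclideanSpace ℝ M)
  rw [finrank_euclideanSpace] at hN hM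
  rw [integral_const_mul] at hcompare
  linarith

lemma integral_norm_matrixMap_le [Nonempty M] [Nonempty N] :
    ∫ h, ‖matrixMap h‖ ∂stdGaussian (EuclideanSpace ℝ (M × N)) ≤
      √(Fintype.card N) + √(Fintype.card M) := by
  have hlim : Filter.Tendsto
      (fun c : ℝ ↦ c ^ 2 * ∫ h, ‖matrixMap h‖ ∂stdGaussian (EuclideanSpace ℝ (M × N)))
      (nhdsWithin 1 (Set.Iio 1))
      (nhds (1 ^ 2 * ∫ h, ‖matrixMap h‖ ∂stdGaussian (EuclideanSpace ℝ (M × N)))) :=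
    (((continuous_pow 2).mul continuous_const).tendsto 1).mono_left nhdsWithin_le_nhds
  rw [one_pow, one_mul] at hlim
  exact le_of_tendsto hlim (Filter.mem_of_superset (Ioo_mem_nhdsLT zero_lt_one)
    fun c hc ↦ sq_mul_integral_norm_matrixMap_le hc.1 hc.2)

end GaussianMatrix

section Separability

lemma measure_exists_lt_le_of_forall_finset {Ω X : Type*} [MeasurableSpace Ω] {μ : Measure Ω}
    [TopologicalSpace X] [SecondCountableTopology X] {S : Set X} {f : X → Ω → ℝ}
    (hf : ∀ ω, Continuous fun x ↦ f x ω) {T : ℝ} {p : ENNReal}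
    (hfin : ∀ s : Finset X, s.Nonempty → (∀ x ∈ s, x ∈ S) → ∀ ε > 0,
      μ {ω | ∃ x ∈ s, f x ω ≤ T - ε} ≤ p) :
    μ {ω | ∃ x ∈ S, f x ω < T} ≤ p := by
  classical
  obtain rfl | hS := S.eq_empty_or_nonempty
  · simp
  have := hS.to_subtype
  let d (n : ℕ) : X := (TopologicalSpace.denseSeq S n).1
  let A (n : ℕ) : Set Ω :=
    {ω | ∃ x ∈ (Finset.range (n + 1)).image d, f x ω ≤ T - 1 / ((n : ℝ) + 1)}
  have hmono : Monotone A := by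
    rintro n k hnk ω ⟨x, hx, hxω⟩
    refine ⟨x, Finset.image_subset_image (Finset.range_subset_range.2 (by lia)) hx,
      hxω.trans (sub_le_sub_left (one_div_le_one_div_of_le (by positivity) ?_) T)⟩
    gcongr
  have hsub : {ω | ∃ x ∈ S, f x ω < T} ⊆ ⋃ n, A n := by
    rintro ω ⟨x, hxS, hx⟩
    obtain ⟨k, hk⟩ := (TopologicalSpace.denseRange_denseSeq S).exists_mem_open
      (isOpen_Iio.preimage ((hf ω).comp continuous_subtype_val)) ⟨⟨x, hxS⟩, hx⟩
    obtain ⟨n, hn⟩ := exists_nat_one_div_lt (K := ℝ) (sub_pos.2 hk)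
    refine Set.mem_iUnion.2 ⟨max n k, d k, Finset.mem_image_of_mem d (by simp), ?_⟩
    have hle : 1 / ((max n k : ℕ) + 1 : ℝ) ≤ 1 / ((n : ℝ) + 1) := by
      gcongr
      exact le_max_left n k
    simp only [Function.comp_apply] at hn
    linarith
  refine (measure_mono hsub).trans ?_
  rw [hmono.measure_iUnion]
  refine iSup_le fun n ↦ hfin _ (by simp) (fun x hx ↦ ?_) _ (by positivity)
  obtain ⟨k, -, rfl⟩ := Finset.mem_image.1 hx
  exact (TopologicalSpace.denseSeq S k).2

end Separability

section Width

variable {M N : Type*} [Fintype M] [Fintype N] [DecidableEq N] {S : Set (EuclideanSpace ℝ N)}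
  {ψ : EuclideanSpace ℝ N → ℝ} {r : ℝ}

theorem measure_exists_add_lt_norm_matrixMap_le (hS : ∀ x ∈ S, ‖x‖ = 1)
    (hψ : Integrable ψ (stdGaussian (EuclideanSpace ℝ N))) (hSψ : ∀ x ∈ S, ∀ y, ⟪x, y⟫ ≤ ψ y)
    (hr : 0 ≤ r) :
    stdGaussian (EuclideanSpace ℝ (M × N))
        {h | ∃ x ∈ S, √(Fintype.card M) + ∫ y, ψ y ∂stdGaussian (EuclideanSpace ℝ N) + r <
          ‖matrixMap h x‖} ≤
      ENNReal.ofReal (Real.exp (-r ^ 2 / 2)) := by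
  set K := √(Fintype.card M) + ∫ y, ψ y ∂stdGaussian (EuclideanSpace ℝ N) + r
  have hnorm : ∫ y, ‖y‖ ∂stdGaussian (EuclideanSpace ℝ M) ≤ √(Fintype.card M) := by
    simpa using integral_norm_le_sqrt_finrank (E := EuclideanSpace ℝ M)
  let B : Set (EuclideanSpace ℝ M) := {u | ‖u‖ ≤ 1}
  have hball (h : EuclideanSpace ℝ (M × N)) (hh : ∃ x ∈ S, K < ‖matrixMap h x‖) :
      ∃ a ∈ S ×ˢ B, -⟪a.2, matrixMap h a.1⟫ < -K := by
    obtain ⟨x, hx, hlt⟩ := hh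
    refine ⟨(x, ‖matrixMap h x‖⁻¹ • matrixMap h x), ⟨hx, ?_⟩, ?_⟩
    · simpa [B, norm_smul] using inv_mul_le_one
    · rwa [real_inner_smul_left, real_inner_self_eq_norm_mul_norm, ← mul_assoc,
        inv_mul_mul_self, neg_lt_neg_iff]
  refine (measure_mono hball).trans (measure_exists_lt_le_of_forall_finset (fun h ↦ by fun_prop)
    fun s hs hsS ε hε ↦ ?_)
  have := hs.coe_sort
  rw [← ofReal_measureReal]
  refine ENNReal.ofReal_le_ofReal ((measureReal_mono ?_).trans (measureReal_exists_le_inner_le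
    (x := fun a : s ↦ a.1.1) (u := fun a : s ↦ a.1.2)
    (b := fun a ↦ outerProduct a.2.1.2 a.1.1.1) (φ := fun y ↦ ‖y‖)
    (fun a ↦ hS _ (hsS _ a.2).1) (fun a ↦ (hsS _ a.2).2)
    (fun a b ↦ inner_outerProduct_outerProduct _ _ _ _) hψ IsGaussian.integrable_fun_id.norm
    (fun a ↦ hSψ _ (hsS _ a.2).1) (fun a y ↦ (real_inner_le_norm _ _).trans
      (mul_le_of_le_one_left (norm_nonneg y) (hsS _ a.2).2)) hr hε))
  rintro h ⟨a, ha, hle⟩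
  refine ⟨(⟨a, ha⟩, ⟨a, ha⟩), ?_⟩
  rw [inner_outerProduct]
  linarith

lemma exists_lt_one_sub_le_mul (a : ℝ) {ε : ℝ} (hε : 0 < ε) : ∃ c < 1, a - ε ≤ c * a := by
  have ha : 0 < |a| + 1 := by positivity
  refine ⟨1 - ε / (|a| + 1), sub_lt_self 1 (by positivity), ?_⟩
  have hle : ε / (|a| + 1) * a ≤ ε := by
    rw [div_mul_eq_mul_div, div_le_iff₀ ha]
    gcongr
    linarith [le_abs_self a]
  linarith

theorem measure_exists_norm_matrixMap_lt_le [Nonempty M] (hS : ∀ x ∈ S, ‖x‖ = 1)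
    (hψ : Integrable ψ (stdGaussian (EuclideanSpace ℝ N))) (hSψ : ∀ x ∈ S, ∀ y, -⟪x, y⟫ ≤ ψ y)
    (hr : 0 ≤ r) :
    stdGaussian (EuclideanSpace ℝ (M × N))
        {h | ∃ x ∈ S, ‖matrixMap h x‖ <
          √(Fintype.card M - 1) - ∫ y, ψ y ∂stdGaussian (EuclideanSpace ℝ N) - r} ≤
      ENNReal.ofReal (Real.exp (-r ^ 2 / 2)) := by
  have hK : √(Fintype.card M - 1) ≤ ∫ y, ‖y‖ ∂stdGaussian (EuclideanSpace ℝ M) := by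
    simpa using sqrt_finrank_sub_one_le_integral_norm (E := EuclideanSpace ℝ M)
  refine measure_exists_lt_le_of_forall_finset (f := fun x h ↦ ‖matrixMap h x‖)
    (fun h ↦ by fun_prop) fun s hs hsS ε hε ↦ ?_
  obtain ⟨c, hc, hcK⟩ := exists_lt_one_sub_le_mul
    (∫ y, ‖y‖ ∂stdGaussian (EuclideanSpace ℝ M)) (half_pos hε)
  obtain ⟨t, ht, htnet⟩ :=
    exists_finset_forall_exists_mul_norm_le_inner (EuclideanSpace ℝ M) hc
  have : Nonempty t := let ⟨u, hu, _⟩ := htnet 0; ⟨⟨u, hu⟩⟩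
  have := hs.coe_sort
  rw [← ofReal_measureReal]
  refine ENNReal.ofReal_le_ofReal ((measureReal_mono ?_).trans
    (measureReal_exists_forall_inner_le_le (x := fun x : s ↦ x.1) (u := fun u : t ↦ u.1)
      (b := fun a ↦ outerProduct a.2.1 a.1.1) (φ := fun y ↦ c * ‖y‖)
      (fun x ↦ hS _ (hsS _ x.2)) (fun u ↦ (ht _ u.2).le)
      (fun a b ↦ inner_outerProduct_outerProduct _ _ _ _) hψ
      (IsGaussian.integrable_fun_id.norm.const_mul c)
      (fun x ↦ hSψ _ (hsS _ x.2)) (by simpa using htnet) hr (half_pos hε)))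
  rintro h ⟨x, hx, hle⟩
  refine ⟨⟨x, hx⟩, fun u ↦ ?_⟩
  rw [inner_outerProduct, integral_const_mul]
  have hinner : ⟪u.1, matrixMap h x⟫ ≤ ‖matrixMap h x‖ := by
    simpa [ht _ u.2] using real_inner_le_norm u.1 (matrixMap h x)
  linarith

end Width

section LstarRank

variable {n₁ n₂ : ℕ}

/-- The entries of a matrix, as a vector of the Euclidean space with the Frobenius norm. -/
def entries (X : Matrix (Fin n₁) (Fin n₂) ℝ) : EuclideanSpace ℝ (Fin n₁ × Fin n₂) :=
  .toLp 2 fun p ↦ X p.1 p.2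

lemma norm_entries (X : Matrix (Fin n₁) (Fin n₂) ℝ) : ‖entries X‖ = frobNorm X := by
  simp [entries, EuclideanSpace.norm_eq, frobNorm, Fintype.sum_prod_type]

lemma frobNorm_pos {X : Matrix (Fin n₁) (Fin n₂) ℝ} (hX : X ≠ 0) : 0 < frobNorm X := by
  rw [← norm_entries, norm_pos_iff]
  contrapose! hX
  ext i j
  exact congrFun (congrArg WithLp.ofLp hX) (i, j)

lemma sq_singVals (X : Matrix (Fin n₁) (Fin n₂) ℝ) (k : Fin n₁) :
    singVals X k ^ 2 = (Matrix.isHermitian_mul_conjTranspose_self X).eigenvalues k :=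
  Real.sq_sqrt ((Matrix.posSemidef_self_mul_conjTranspose X).eigenvalues_nonneg k)

lemma norm_toEuclideanLin_transpose_eigenvectorBasis (X : Matrix (Fin n₁) (Fin n₂) ℝ)
    (k : Fin n₁) :
    ‖Matrix.toEuclideanLin X.transpose
      ((Matrix.isHermitian_mul_conjTranspose_self X).eigenvectorBasis k)‖ = singVals X k := by
  set b := (Matrix.isHermitian_mul_conjTranspose_self X).eigenvectorBasis
  have heigen : Matrix.toEuclideanLin X (Matrix.toEuclideanLin X.transpose (b k)) =
      singVals X k ^ 2 • b k := by
    rw [sq_singVals]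
    apply WithLp.ofLp_injective
    rw [WithLp.ofLp_smul, ← Matrix.IsHermitian.mulVec_eigenvectorBasis, ← Matrix.mulVec_mulVec]
    rfl
  have hadjoint : Matrix.toEuclideanLin X.transpose =
      LinearMap.adjoint (Matrix.toEuclideanLin X) := by
    rw [← Matrix.toEuclideanLin_conjTranspose_eq_adjoint,
      Matrix.conjTranspose_eq_transpose_of_trivial]
  rw [← sq_eq_sq₀ (norm_nonneg _) (show 0 ≤ singVals X k from Real.sqrt_nonneg _),
    ← real_inner_self_eq_norm_sq]
  nth_rewrite 2 [hadjoint]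
  rw [LinearMap.adjoint_inner_right, heigen, real_inner_smul_left, real_inner_self_eq_norm_sq,
    b.orthonormal.1 k, one_pow, mul_one]

lemma inner_entries_eq_sum (X : Matrix (Fin n₁) (Fin n₂) ℝ)
    (h : EuclideanSpace ℝ (Fin n₁ × Fin n₂))
    (b : OrthonormalBasis (Fin n₁) ℝ (EuclideanSpace ℝ (Fin n₁))) :
    ⟪entries X, h⟫ = ∑ k, ⟪b k, matrixMap h (Matrix.toEuclideanLin X.transpose (b k))⟫ := by
  let H : Matrix (Fin n₁) (Fin n₂) ℝ := Matrix.of fun i j ↦ h (i, j)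
  have hcomp : (matrixMap h).toLinearMap ∘ₗ Matrix.toEuclideanLin X.transpose =
      Matrix.toEuclideanLin (H * X.transpose) := by
    rw [Matrix.toLpLin_mul_same]
    rfl
  calc ⟪entries X, h⟫ = (H * X.transpose).trace := by
        simp [entries, H, PiLp.inner_apply, Fintype.sum_prod_type, Matrix.trace, Matrix.mul_apply]
    _ = LinearMap.trace ℝ _ (Matrix.toEuclideanLin (H * X.transpose)) := by
        rw [Matrix.toEuclideanLin, Matrix.toLpLin_eq_toLin, Matrix.trace_toLin_eq]
    _ = ∑ k, ⟪b k, matrixMap h (Matrix.toEuclideanLin X.transpose (b k))⟫ := by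
        rw [← hcomp, LinearMap.trace_eq_sum_inner _ b]
        rfl

lemma abs_inner_entries_le (X : Matrix (Fin n₁) (Fin n₂) ℝ)
    (h : EuclideanSpace ℝ (Fin n₁ × Fin n₂)) :
    |⟪entries X, h⟫| ≤ nuclearNorm X * ‖matrixMap h‖ := by
  let b := (Matrix.isHermitian_mul_conjTranspose_self X).eigenvectorBasis
  rw [inner_entries_eq_sum X h b, nuclearNorm, Finset.sum_mul]
  refine (Finset.abs_sum_le_sum_abs _ _).trans (Finset.sum_le_sum fun k _ ↦ ?_)
  calc |⟪b k, matrixMap h (Matrix.toEuclideanLin X.transpose (b k))⟫|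
      ≤ ‖b k‖ * ‖matrixMap h (Matrix.toEuclideanLin X.transpose (b k))‖ :=
        abs_real_inner_le_norm _ _
    _ ≤ 1 * (‖matrixMap h‖ * singVals X k) := by
        rw [b.orthonormal.1 k, ← norm_toEuclideanLin_transpose_eigenvectorBasis]
        gcongr
        exact (matrixMap h).le_opNorm _
    _ = singVals X k * ‖matrixMap h‖ := by ring

lemma sum_sq_singVals (X : Matrix (Fin n₁) (Fin n₂) ℝ) :
    ∑ k, singVals X k ^ 2 = frobNorm X ^ 2 := by
  have htrace := (Matrix.isHermitian_mul_conjTranspose_self X).trace_eq_sum_eigenvalues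
  simp_rw [sq_singVals]
  rw [frobNorm, Real.sq_sqrt (by positivity)]
  simpa [Matrix.trace, Matrix.mul_apply, sq] using htrace.symm

lemma lstarRank_le_rank (X : Matrix (Fin n₁) (Fin n₂) ℝ) : lstarRank X ≤ X.rank := by
  refine div_le_of_le_mul₀ (sq_nonneg _) (Nat.cast_nonneg _) ?_
  have hcard : X.rank = (Finset.univ.filter fun k ↦ singVals X k ≠ 0).card := by
    rw [← Matrix.rank_self_mul_conjTranspose,
      (Matrix.isHermitian_mul_conjTranspose_self X).rank_eq_card_non_zero_eigs,
      Fintype.card_subtype]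
    simp_rw [← sq_singVals, pow_ne_zero_iff two_ne_zero]
  calc nuclearNorm X ^ 2 = (∑ k with singVals X k ≠ 0, singVals X k) ^ 2 := by
        rw [Finset.sum_filter_ne_zero, nuclearNorm]
    _ ≤ X.rank * ∑ k with singVals X k ≠ 0, singVals X k ^ 2 := by
        rw [hcard]
        exact sq_sum_le_card_mul_sum_sq
    _ ≤ X.rank * frobNorm X ^ 2 := by
        rw [← sum_sq_singVals]
        gcongr
        exact Finset.subset_univ _

lemma exists_lstarRank_le_one [NeZero n₁] [NeZero n₂] :
    ∃ X : Matrix (Fin n₁) (Fin n₂) ℝ, X ≠ 0 ∧ lstarRank X ≤ 1 := by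
  refine ⟨Matrix.vecMulVec (1 : Fin n₁ → ℝ) 1, fun h ↦ ?_, (lstarRank_le_rank _).trans ?_⟩
  · simpa [Matrix.vecMulVec_apply] using Matrix.ext_iff.2 h 0 0
  · exact Nat.cast_le_one.2 (Matrix.rank_vecMulVec_le _ _)

/-- The matrices of unit Frobenius norm and `ℓ*`-rank at most `τ`, as vectors of entries. -/
def lstarSphere (n₁ n₂ : ℕ) (τ : ℝ) : Set (EuclideanSpace ℝ (Fin n₁ × Fin n₂)) :=
  {x | ∃ X : Matrix (Fin n₁) (Fin n₂) ℝ, X ≠ 0 ∧ lstarRank X ≤ τ ∧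
    (frobNorm X)⁻¹ • entries X = x}

variable {τ : ℝ} {x : EuclideanSpace ℝ (Fin n₁ × Fin n₂)}

lemma lstarSphere_nonempty [NeZero n₁] [NeZero n₂] (hτ : 1 ≤ τ) :
    (lstarSphere n₁ n₂ τ).Nonempty :=
  let ⟨X, hX, hrank⟩ := exists_lstarRank_le_one (n₁ := n₁) (n₂ := n₂)
  ⟨_, X, hX, hrank.trans hτ, rfl⟩

lemma norm_eq_one_of_mem_lstarSphere (hx : x ∈ lstarSphere n₁ n₂ τ) : ‖x‖ = 1 := by
  obtain ⟨X, hX, -, rfl⟩ := hx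
  have hpos := frobNorm_pos hX
  rw [norm_smul, norm_entries, norm_inv, Real.norm_of_nonneg hpos.le, inv_mul_cancel₀ hpos.ne']

lemma abs_inner_le_of_mem_lstarSphere (hx : x ∈ lstarSphere n₁ n₂ τ)
    (h : EuclideanSpace ℝ (Fin n₁ × Fin n₂)) : |⟪x, h⟫| ≤ √τ * ‖matrixMap h‖ := by
  obtain ⟨X, hX, hτ, rfl⟩ := hx
  have hpos := frobNorm_pos hX
  have hnuclear : (frobNorm X)⁻¹ * nuclearNorm X ≤ √τ := by
    refine Real.le_sqrt_of_sq_le ?_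
    rwa [inv_mul_eq_div, div_pow]
  rw [real_inner_smul_left, abs_mul, abs_of_pos (inv_pos.2 hpos)]
  calc (frobNorm X)⁻¹ * |⟪entries X, h⟫|
      ≤ (frobNorm X)⁻¹ * (nuclearNorm X * ‖matrixMap h‖) := by
        gcongr
        exact abs_inner_entries_le X h
    _ ≤ √τ * ‖matrixMap h‖ := by
        rw [← mul_assoc]
        gcongr

end LstarRank

lemma neg_sqrt_mul_sq {a : ℝ} (t : ℝ) (ha : 0 ≤ a) : -(√a * t) ^ 2 = -a * t ^ 2 := by
  rw [mul_pow, Real.sq_sqrt ha, neg_mul]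

section ConstrainedSingularValues

variable {m n₁ n₂ : ℕ} {τ t : ℝ}

lemma opOf_ensembleMatrices (ω : Fin m × Fin n₁ × Fin n₂ → ℝ) (X : Matrix (Fin n₁) (Fin n₂) ℝ)
    (k : Fin m) : opOf (ensembleMatrices ω) X k = matrixMap (.toLp 2 ω) (entries X) k := by
  simp only [opOf, matInner, ensembleMatrices, Matrix.trace, Matrix.diag_apply, Matrix.mul_apply,
    Matrix.transpose_apply, Matrix.of_apply, matrixMap_apply, entries, Fintype.sum_prod_type]
  exact Finset.sum_comm

lemma vnorm_scaledOp (ω : Fin m × Fin n₁ × Fin n₂ → ℝ) (X : Matrix (Fin n₁) (Fin n₂) ℝ) :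
    vnorm (scaledOp ω X) = ‖matrixMap (.toLp 2 ω) (entries X)‖ / √m := by
  simp [vnorm, scaledOp, opOf_ensembleMatrices, EuclideanSpace.norm_eq, div_pow,
    ← Finset.sum_div]

lemma setOf_vnorm_scaledOp_div_frobNorm_eq (ω : Fin m × Fin n₁ × Fin n₂ → ℝ) (τ : ℝ) :
    {c | ∃ X : Matrix (Fin n₁) (Fin n₂) ℝ, X ≠ 0 ∧ lstarRank X ≤ τ ∧
      c = vnorm (scaledOp ω X) / frobNorm X} =
      (fun x ↦ ‖matrixMap (.toLp 2 ω) x‖ / √m) '' lstarSphere n₁ n₂ τ := by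
  have hnormalize (X : Matrix (Fin n₁) (Fin n₂) ℝ) :
      vnorm (scaledOp ω X) / frobNorm X =
        ‖matrixMap (.toLp 2 ω) ((frobNorm X)⁻¹ • entries X)‖ / √m := by
    rw [vnorm_scaledOp, map_smul, norm_smul, norm_inv,
      Real.norm_of_nonneg (show 0 ≤ frobNorm X from Real.sqrt_nonneg _)]
    ring
  ext c
  simp only [hnormalize, lstarSphere, Set.mem_image, Set.mem_ofPred_eq]
  constructor
  · rintro ⟨X, hX, hτ, rfl⟩
    exact ⟨_, ⟨X, hX, hτ, rfl⟩, rfl⟩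
  · rintro ⟨_, ⟨X, hX, hτ, rfl⟩, rfl⟩
    exact ⟨X, hX, hτ, rfl⟩

lemma gaussianEnsemble_toLp_mem_le (A : Set (EuclideanSpace ℝ (Fin m × Fin n₁ × Fin n₂))) :
    gaussianEnsemble m n₁ n₂ {ω | .toLp 2 ω ∈ A} ≤ stdGaussian _ A := by
  rw [← map_pi_eq_stdGaussian]
  exact Measure.le_map_apply (by fun_prop) A

variable [NeZero n₁] [NeZero n₂]

variable (n₁ n₂ τ) in
lemma integral_sqrt_mul_norm_matrixMap_le :
    ∫ h, √τ * ‖matrixMap h‖ ∂stdGaussian (EuclideanSpace ℝ (Fin n₁ × Fin n₂)) ≤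
      √τ * (√n₁ + √n₂) := by
  rw [integral_const_mul, add_comm √(n₁ : ℝ)]
  gcongr
  simpa using integral_norm_matrixMap_le (M := Fin n₁) (N := Fin n₂)

variable [NeZero m]

theorem gaussianEnsemble_lt_cmsvMax_le (hτ : 1 ≤ τ) (ht : 0 ≤ t) :
    gaussianEnsemble m n₁ n₂
        {ω | 1 + √τ * (√n₁ + √n₂) / √m + t < cmsvMax (scaledOp ω) τ} ≤
      ENNReal.ofReal (Real.exp (-(m : ℝ) * t ^ 2 / 2)) := by
  have hm : 0 < √(m : ℝ) := Real.sqrt_pos.2 (Nat.cast_pos.2 (NeZero.pos m))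
  rw [← neg_sqrt_mul_sq t m.cast_nonneg]
  refine (measure_mono fun ω hω ↦ ?_).trans ((gaussianEnsemble_toLp_mem_le _).trans
    (measure_exists_add_lt_norm_matrixMap_le (M := Fin m) (S := lstarSphere n₁ n₂ τ)
      (fun x ↦ norm_eq_one_of_mem_lstarSphere) ((integrable_norm_matrixMap _ _).const_mul √τ)
      (fun x hx h ↦ (le_abs_self _).trans (abs_inner_le_of_mem_lstarSphere hx h))
      (mul_nonneg hm.le ht)))
  rw [Set.mem_ofPred_eq, cmsvMax, setOf_vnorm_scaledOp_div_frobNorm_eq] at hω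
  obtain ⟨_, ⟨x, hx, rfl⟩, hlt⟩ :=
    exists_lt_of_lt_csSup ((lstarSphere_nonempty hτ).image _) hω
  refine ⟨x, hx, ?_⟩
  have hwidth := integral_sqrt_mul_norm_matrixMap_le n₁ n₂ τ
  rw [lt_div_iff₀ hm, add_mul, add_mul, one_mul, div_mul_cancel₀ _ hm.ne'] at hlt
  rw [Fintype.card_fin]
  linarith

theorem gaussianEnsemble_cmsvMin_lt_le (hτ : 1 ≤ τ) (ht : 0 ≤ t) :
    gaussianEnsemble m n₁ n₂
        {ω | cmsvMin (scaledOp ω) τ < √(m - 1) / √m - √τ * (√n₁ + √n₂) / √m - t} ≤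
      ENNReal.ofReal (Real.exp (-(m : ℝ) * t ^ 2 / 2)) := by
  have hm : 0 < √(m : ℝ) := Real.sqrt_pos.2 (Nat.cast_pos.2 (NeZero.pos m))
  rw [← neg_sqrt_mul_sq t m.cast_nonneg]
  refine (measure_mono fun ω hω ↦ ?_).trans ((gaussianEnsemble_toLp_mem_le _).trans
    (measure_exists_norm_matrixMap_lt_le (M := Fin m) (S := lstarSphere n₁ n₂ τ)
      (fun x ↦ norm_eq_one_of_mem_lstarSphere) ((integrable_norm_matrixMap _ _).const_mul √τ)
      (fun x hx h ↦ (neg_le_abs _).trans (abs_inner_le_of_mem_lstarSphere hx h))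
      (mul_nonneg hm.le ht)))
  rw [Set.mem_ofPred_eq, cmsvMin, setOf_vnorm_scaledOp_div_frobNorm_eq] at hω
  obtain ⟨_, ⟨x, hx, rfl⟩, hlt⟩ :=
    exists_lt_of_csInf_lt ((lstarSphere_nonempty hτ).image _) hω
  refine ⟨x, hx, ?_⟩
  have hwidth := integral_sqrt_mul_norm_matrixMap_le n₁ n₂ τ
  rw [div_lt_iff₀ hm, sub_mul, sub_mul, div_mul_cancel₀ _ hm.ne',
    div_mul_cancel₀ _ hm.ne'] at hlt
  rw [Fintype.card_fin]
  linarith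

end ConstrainedSingularValues

lemma sqrt_mul_sqrt_add_sqrt_div_le {τ a b m : ℝ} (hτ : 0 ≤ τ) (hab : a ≤ b) (hm : 0 ≤ m) :
    √τ * (√a + √b) / √m ≤ 2 * √(τ * b / m) := by
  rw [Real.sqrt_div' _ hm, ← mul_div_assoc, Real.sqrt_mul hτ, mul_left_comm, two_mul]
  gcongr

lemma one_sub_sqrt_div_le_sqrt_sub_one_div {c m : ℝ} (hc : 1 ≤ c) (hm : 1 ≤ m) :
    1 - √(c / m) ≤ √(m - 1) / √m := by
  have hsqrt : √m ≤ √(m - 1) + 1 := by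
    rw [Real.sqrt_le_left (by positivity), add_sq, Real.sq_sqrt (sub_nonneg.2 hm)]
    linarith [Real.sqrt_nonneg (m - 1)]
  have hm₀ : 0 < √m := Real.sqrt_pos.2 (zero_lt_one.trans_le hm)
  rw [Real.sqrt_div' _ (zero_le_one.trans hm), one_sub_div hm₀.ne']
  gcongr
  linarith [Real.one_le_sqrt.2 hc]

/-- Gaussian concentration for the ℓ*-constrained singular values. -/
theorem stmt14 {m n₁ n₂ : ℕ} (hn : n₁ ≤ n₂) (τ : ℝ) (hτ1 : 1 ≤ τ) (hτ2 : τ ≤ (n₁ : ℝ))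
    (t : ℝ) (ht : 0 < t) :
    gaussianEnsemble m n₁ n₂
        {ω | 1 + 3 * Real.sqrt (τ * n₂ / m) + t < cmsvMax (scaledOp ω) τ} ≤
      ENNReal.ofReal (Real.exp (-(m : ℝ) * t ^ 2 / 2)) ∧
    gaussianEnsemble m n₁ n₂
        {ω | cmsvMin (scaledOp ω) τ < 1 - 3 * Real.sqrt (τ * n₂ / m) - t} ≤
      ENNReal.ofReal (Real.exp (-(m : ℝ) * t ^ 2 / 2)) := by
  obtain rfl | hm := Nat.eq_zero_or_pos m
  · simp [gaussianEnsemble, prob_le_one]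
  have hn₁ : 0 < n₁ := Nat.cast_pos.1 (zero_lt_one.trans_le (hτ1.trans hτ2))
  have : NeZero m := ⟨hm.ne'⟩
  have : NeZero n₁ := ⟨hn₁.ne'⟩
  have : NeZero n₂ := ⟨(hn₁.trans_le hn).ne'⟩
  have hdim : 1 ≤ τ * n₂ := one_le_mul_of_one_le_of_one_le hτ1 (Nat.one_le_cast.2 (NeZero.pos n₂))
  have hwidth : √τ * (√n₁ + √n₂) / √m ≤ 2 * √(τ * n₂ / m) :=
    sqrt_mul_sqrt_add_sqrt_div_le (zero_le_one.trans hτ1) (Nat.cast_le.2 hn) m.cast_nonneg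
  have hsqrt : 1 - √(τ * n₂ / m) ≤ √(m - 1) / √m :=
    one_sub_sqrt_div_le_sqrt_sub_one_div hdim (Nat.one_le_cast.2 hm)
  refine ⟨(measure_mono fun ω hω ↦ ?_).trans (gaussianEnsemble_lt_cmsvMax_le hτ1 ht.le),
    (measure_mono fun ω hω ↦ ?_).trans (gaussianEnsemble_cmsvMin_lt_le hτ1 ht.le)⟩
  · rw [Set.mem_ofPred_eq] at hω ⊢
    linarith [Real.sqrt_nonneg (τ * n₂ / m)]
  · rw [Set.mem_ofPred_eq] at hω ⊢
    linarith

end
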